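/- arXiv:1505.05446 — 5 statements merged into one kernel-verified Lean document; each statement's English description precedes it below -/
import Mathlib

section
/- Let S be a nonempty connected regular surface in ℝ³ satisfying property 𝒫. Then S is a Euclidean sphere: there exist a point c ∈ ℝ³ and a real number r > 0 such that S = {x ∈ ℝ³ | ‖x − c‖ = r}. -/
noncomputable section

open Module
open scoped RealInnerProductSpace

abbrev E3 : Type := EuclideanSpace ℝ (Fin 3)
abbrev E2 : Type := EuclideanSpace ℝ (Fin 2)

/-- `f : E2 → E3` restricted to the open set `U` is a local parametrization of the
surface `S` around the point `p`: it is smooth, has injective derivative at every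
point of `U`, and is a homeomorphism onto its image `f '' U`, which is an open
neighborhood of `p` in `S` for the subspace topology. -/
def IsChartAt (S : Set E3) (p : E3) (f : E2 → E3) (U : Set E2) : Prop :=
  IsOpen U ∧
  ContDiffOn ℝ (⊤ : ℕ∞) f U ∧
  (∀ u ∈ U, Function.Injective (fderiv ℝ f u)) ∧
  p ∈ f '' U ∧
  (∃ W : Set E3, IsOpen W ∧ f '' U = W ∩ S) ∧
  (∃ φ : U ≃ₜ (f '' U), ∀ u : U, (φ u : E3) = f u)

/-- A regular surface in ℝ³. -/
def IsRegularSurface (S : Set E3) : Prop :=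
  ∀ p ∈ S, ∃ f U, IsChartAt S p f U

/-- A plane: a 2-dimensional affine subspace of ℝ³. -/
def IsPlane (Pl : AffineSubspace ℝ E3) : Prop := finrank ℝ Pl.direction = 2

/-- A line: a 1-dimensional affine subspace of ℝ³. -/
def IsLine (L : AffineSubspace ℝ E3) : Prop := finrank ℝ L.direction = 1

/-- `C` is the circle in the plane `Pl` of center `c` and radius `r ≥ 0`. -/
def IsCircleIn (Pl : AffineSubspace ℝ E3) (c : E3) (r : ℝ) (C : Set E3) : Prop :=
  c ∈ Pl ∧ 0 ≤ r ∧ C = {x ∈ (Pl : Set E3) | ‖x - c‖ = r}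

/-- Property 𝒫: every plane meeting `S` meets it in a (possibly degenerate) circle. -/
def PropertyP (S : Set E3) : Prop :=
  ∀ Pl : AffineSubspace ℝ E3, IsPlane Pl → ((Pl : Set E3) ∩ S).Nonempty →
    ∃ c r, IsCircleIn Pl c r ((Pl : Set E3) ∩ S)

/-- The Minkowski bilinear form ⟨x, y⟩₁ = x₁y₁ + x₂y₂ − x₃y₃ on ℝ³. -/
def mink (x y : E3) : ℝ := x 0 * y 0 + x 1 * y 1 - x 2 * y 2

/-- A spacelike plane: a plane on whose direction the Minkowski form is positive definite. -/
def IsSpacelikePlane (Pl : AffineSubspace ℝ E3) : Prop :=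
  IsPlane Pl ∧ ∀ v ∈ Pl.direction, v ≠ 0 → 0 < mink v v

/-- `C` is the circle (for the Minkowski-induced metric) in the spacelike plane `Pl`
of center `c` and radius `r ≥ 0`. -/
def IsMCircleIn (Pl : AffineSubspace ℝ E3) (c : E3) (r : ℝ) (C : Set E3) : Prop :=
  c ∈ Pl ∧ 0 ≤ r ∧ C = {x ∈ (Pl : Set E3) | mink (x - c) (x - c) = r ^ 2}

/-- Property 𝒫*: every spacelike plane meeting `S` meets it in a (possibly degenerate) circle. -/
def PropertyPStar (S : Set E3) : Prop :=
  ∀ Pl : AffineSubspace ℝ E3, IsSpacelikePlane Pl → ((Pl : Set E3) ∩ S).Nonempty →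
    ∃ c r, IsMCircleIn Pl c r ((Pl : Set E3) ∩ S)

/-- The tangent plane associated to a parametrization `f` at the parameter `u`:
the image of the derivative of `f` at `u`. -/
def TangentPlane (f : E2 → E3) (u : E2) : Submodule ℝ E3 :=
  LinearMap.range (fderiv ℝ f u : E2 →ₗ[ℝ] E3)

/-- A spacelike regular surface in 𝕃³: a regular surface all of whose tangent planes are
2-dimensional subspaces on which the Minkowski form is positive definite. -/
def IsSpacelikeSurface (S : Set E3) : Prop :=
  ∀ p ∈ S, ∃ f U, IsChartAt S p f U ∧
    ∀ u ∈ U, f u = p →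
      finrank ℝ (TangentPlane f u) = 2 ∧
      ∀ v ∈ TangentPlane f u, v ≠ 0 → 0 < mink v v

/-! Let `m` be the midpoint of two distinct points `p`, `q` of `S`, and let `k = ‖p - m‖²`. A circle
through `p` and `q` gives `m` the power `-k`, and every line through `m` lies in a plane through `p`
and `q`; so it meets `S` in two points whose signed distances from `m` have product `-k`. Hence
every plane through `m` meets `S` in a circle with respect to which `m` has power `-k`, that is, in
the set of `m + x` with `‖x‖² - 2 ⟪e, x⟫ = k` for some `e`. As `⟪e, x⟫` is determined by the
intersection of `S` with the line `m + ℝ x`, the functionals `⟪e, ·⟫` of two planes agree where the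
planes meet. They therefore glue to a function linear on every plane, hence linear, and the vector
representing it is the displacement from `m` to the center of the sphere. -/

section Planes

variable {K V : Type*} [DivisionRing K] [AddCommGroup V] [Module K V]

lemma finrank_span_pair_eq_two {x y : V} (h : LinearIndependent K ![x, y]) :
    finrank K (Submodule.span K {x, y}) = 2 := by
  rw [← Matrix.range_cons_cons_empty x y ![], finrank_span_eq_card h, Fintype.card_fin]

lemma exists_finrank_eq_two_mem_mem (hV : 1 < Module.rank K V) (x y : V) :
    ∃ W : Submodule K V, finrank K W = 2 ∧ x ∈ W ∧ y ∈ W := by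
  wlog hx : x ≠ 0 generalizing x with of_ne_zero
  · have : Nontrivial V := rank_pos_iff_nontrivial.1 (zero_lt_one.trans hV)
    obtain ⟨z, hz⟩ := exists_ne (0 : V)
    obtain ⟨W, hW, -, hyW⟩ := of_ne_zero z hz
    exact ⟨W, hW, by simp [not_not.1 hx], hyW⟩
  by_cases hxy : LinearIndependent K ![x, y]
  · exact ⟨_, finrank_span_pair_eq_two hxy, Submodule.subset_span (by simp),
      Submodule.subset_span (by simp)⟩
  · obtain ⟨a, rfl⟩ : ∃ a : K, a • x = y := by
      simpa only [LinearIndependent.pair_iff' hx, not_forall, not_not] using hxy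
    obtain ⟨z, hz⟩ := exists_linearIndependent_pair_of_one_lt_rank hV hx
    have hxW : x ∈ Submodule.span K {x, z} := Submodule.subset_span (by simp)
    exact ⟨_, finrank_span_pair_eq_two hz, hxW, Submodule.smul_mem _ a hxW⟩

lemma isLinearMap_of_forall_finrank_eq_two {V' : Type*} [AddCommGroup V'] [Module K V']
    (hV : 1 < Module.rank K V) {f : V → V'}
    (hf : ∀ W : Submodule K V, finrank K W = 2 → ∃ g : V →ₗ[K] V', ∀ x ∈ W, f x = g x) :
    IsLinearMap K f where
  map_add x y := by
    obtain ⟨W, hW, hx, hy⟩ := exists_finrank_eq_two_mem_mem hV x y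
    obtain ⟨g, hg⟩ := hf W hW
    rw [hg _ (W.add_mem hx hy), hg x hx, hg y hy, map_add]
  map_smul a x := by
    obtain ⟨W, hW, hx, -⟩ := exists_finrank_eq_two_mem_mem hV x x
    obtain ⟨g, hg⟩ := hf W hW
    rw [hg _ (W.smul_mem a hx), hg x hx, map_smul]

end Planes

lemma exists_ne_zero_vadd_mem_neg_vadd_mem (K : Type*) {V P : Type*} [DivisionRing K]
    [Invertible (2 : K)] [AddCommGroup V] [Module K V] [AddTorsor V P] {S : Set P}
    (hS : S.Nontrivial) : ∃ (m : P) (v : V), v ≠ 0 ∧ v +ᵥ m ∈ S ∧ -v +ᵥ m ∈ S := by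
  obtain ⟨p, hp, q, hq, hpq⟩ := hS
  refine ⟨midpoint K p q, (⅟2 : K) • (p -ᵥ q), ?_, ?_, ?_⟩
  · exact smul_ne_zero (Invertible.ne_zero _) (vsub_ne_zero.2 hpq)
  · rwa [← left_vsub_midpoint, vsub_vadd]
  · rwa [← smul_neg, neg_vsub_eq_vsub_rev, ← right_vsub_midpoint, vsub_vadd]

section Quadratics

variable {a b c : ℝ}

lemma exists_ne_roots_of_pos (ha : 0 < a) (hc : 0 < c) :
    ∃ t₁ t₂ : ℝ, t₁ ≠ t₂ ∧ t₁ ^ 2 * a - 2 * t₁ * b = c ∧ t₂ ^ 2 * a - 2 * t₂ * b = c := by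
  have hdisc : 0 < b ^ 2 + a * c := by positivity
  have hsqrt : √(b ^ 2 + a * c) ^ 2 = b ^ 2 + a * c := Real.sq_sqrt hdisc.le
  have hsqrt_pos : 0 < √(b ^ 2 + a * c) := Real.sqrt_pos.2 hdisc
  refine ⟨(b + √(b ^ 2 + a * c)) / a, (b - √(b ^ 2 + a * c)) / a, fun h ↦ ?_, ?_, ?_⟩
  · rw [div_left_inj' ha.ne'] at h
    linarith
  all_goals
    field_simp
    linear_combination hsqrt

lemma coeff_eq_of_common_roots {b' c' t₁ t₂ : ℝ} (ht : t₁ ≠ t₂)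
    (h₁ : t₁ ^ 2 * a - 2 * t₁ * b = c) (h₂ : t₂ ^ 2 * a - 2 * t₂ * b = c)
    (h₁' : t₁ ^ 2 * a - 2 * t₁ * b' = c') (h₂' : t₂ ^ 2 * a - 2 * t₂ * b' = c') :
    b = b' ∧ c = c' := by
  have hb : b = b' := by
    refine mul_left_cancel₀ (sub_ne_zero.2 ht) ?_
    linear_combination (h₁' - h₂' - h₁ + h₂) / 2
  subst hb
  exact ⟨rfl, h₁.symm.trans h₁'⟩

end Quadratics

section SphericalSections

variable {V P : Type*} [NormedAddCommGroup V] [InnerProductSpace ℝ V] [MetricSpace P]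
  [NormedAddTorsor V P]

lemma vadd_mem_sphere_iff {r : ℝ} (hr : 0 ≤ r) (x e : V) (m : P) :
    x +ᵥ m ∈ Metric.sphere (e +ᵥ m) r ↔ ‖x‖ ^ 2 - 2 * ⟪e, x⟫ = r ^ 2 - ‖e‖ ^ 2 := by
  rw [Metric.mem_sphere, dist_vadd_cancel_right, dist_eq_norm, ← sq_eq_sq₀ (norm_nonneg _) hr,
    norm_sub_sq_real, real_inner_comm]
  constructor <;> intro h <;> linarith

/-- Every plane that meets `S` meets it in a circle. The circle is given as the trace on the plane
of a sphere of the ambient space, whose center need not lie in the plane. -/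
def HasCircularPlaneSections (S : Set P) : Prop :=
  ∀ Pl : AffineSubspace ℝ P, finrank ℝ Pl.direction = 2 → ((Pl : Set P) ∩ S).Nonempty →
    ∃ c r, (Pl : Set P) ∩ S = (Pl : Set P) ∩ Metric.sphere c r

/-- On the affine subspace through `m` with direction `W`, the set `S` is cut out by the equation
of a sphere with center `e +ᵥ m`, with respect to which `m` has power `-k`. -/
def IsSphericalAlong (S : Set P) (m : P) (W : Submodule ℝ V) (e : V) (k : ℝ) : Prop :=
  ∀ x ∈ W, x +ᵥ m ∈ S ↔ ‖x‖ ^ 2 - 2 * ⟪e, x⟫ = k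

variable {S : Set P} {m : P} {W W' : Submodule ℝ V} {e e' v x : V} {k k' : ℝ}

lemma IsSphericalAlong.smul_vadd_mem_iff (h : IsSphericalAlong S m W e k) (hx : x ∈ W) (t : ℝ) :
    t • x +ᵥ m ∈ S ↔ t ^ 2 * ‖x‖ ^ 2 - 2 * t * ⟪e, x⟫ = k := by
  rw [h _ (W.smul_mem t hx), norm_smul, mul_pow, Real.norm_eq_abs, sq_abs, real_inner_smul_right,
    mul_assoc 2]

lemma IsSphericalAlong.eq_norm_sq (h : IsSphericalAlong S m W e k) (hv : v ∈ W)
    (hvS : v +ᵥ m ∈ S) (hnvS : -v +ᵥ m ∈ S) : k = ‖v‖ ^ 2 := by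
  have hv_eq := (h v hv).1 hvS
  have hnv_eq := (h (-v) (W.neg_mem hv)).1 hnvS
  rw [norm_neg, inner_neg_right] at hnv_eq
  linarith

lemma IsSphericalAlong.exists_smul_vadd_mem (h : IsSphericalAlong S m W e k) (hk : 0 < k)
    (hx : x ∈ W) (hx0 : x ≠ 0) :
    ∃ t : ℝ, t • x +ᵥ m ∈ S := by
  obtain ⟨t, -, -, ht, -⟩ := exists_ne_roots_of_pos (b := ⟪e, x⟫) (by positivity : 0 < ‖x‖ ^ 2) hk
  exact ⟨t, (h.smul_vadd_mem_iff hx t).2 ht⟩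

lemma IsSphericalAlong.inner_eq_and_eq (h : IsSphericalAlong S m W e k)
    (h' : IsSphericalAlong S m W' e' k') (hk : 0 < k) (hx : x ∈ W) (hx' : x ∈ W') (hx0 : x ≠ 0) :
    ⟪e, x⟫ = ⟪e', x⟫ ∧ k = k' := by
  obtain ⟨t₁, t₂, ht, h₁, h₂⟩ :=
    exists_ne_roots_of_pos (b := ⟪e, x⟫) (by positivity : 0 < ‖x‖ ^ 2) hk
  have transfer {t : ℝ} (hroot : t ^ 2 * ‖x‖ ^ 2 - 2 * t * ⟪e, x⟫ = k) :
      t ^ 2 * ‖x‖ ^ 2 - 2 * t * ⟪e', x⟫ = k' :=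
    (h'.smul_vadd_mem_iff hx' t).1 ((h.smul_vadd_mem_iff hx t).2 hroot)
  exact coeff_eq_of_common_roots ht h₁ h₂ (transfer h₁) (transfer h₂)

namespace HasCircularPlaneSections

lemma exists_isSphericalAlong (hS : HasCircularPlaneSections S) (hW : finrank ℝ W = 2)
    (hx : x ∈ W) (hxS : x +ᵥ m ∈ S) : ∃ e k, IsSphericalAlong S m W e k := by
  have hxm := AffineSubspace.vadd_mem_mk' m hx
  obtain ⟨c, r, hsec⟩ := hS (.mk' m W) (by rwa [AffineSubspace.direction_mk']) ⟨_, hxm, hxS⟩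
  have mem_iff {y : V} (hy : y ∈ W) : y +ᵥ m ∈ S ↔ y +ᵥ m ∈ Metric.sphere c r := by
    simpa [AffineSubspace.vadd_mem_mk' m hy] using Set.ext_iff.1 hsec (y +ᵥ m)
  have hr : 0 ≤ r := dist_nonneg.trans_eq ((mem_iff hx).1 hxS)
  refine ⟨c -ᵥ m, r ^ 2 - ‖c -ᵥ m‖ ^ 2, fun y hy ↦ ?_⟩
  rw [mem_iff hy, ← vadd_mem_sphere_iff hr y _ m, vsub_vadd]

lemma exists_isSphericalAlong_norm_sq (hS : HasCircularPlaneSections S)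
    (hV : 1 < Module.rank ℝ V) (hv : v ≠ 0) (hvS : v +ᵥ m ∈ S) (hnvS : -v +ᵥ m ∈ S)
    (hW : finrank ℝ W = 2) : ∃ e, IsSphericalAlong S m W e (‖v‖ ^ 2) := by
  have hk : 0 < ‖v‖ ^ 2 := by positivity
  have hWbot : W ≠ ⊥ := by
    rintro rfl
    simp at hW
  obtain ⟨x, hx, hx0⟩ := W.exists_mem_ne_zero_of_ne_bot hWbot
  obtain ⟨W₀, hW₀, hxW₀, hvW₀⟩ := exists_finrank_eq_two_mem_mem hV x v
  obtain ⟨e₀, k₀, h₀⟩ := hS.exists_isSphericalAlong hW₀ hvW₀ hvS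
  obtain rfl := h₀.eq_norm_sq hvW₀ hvS hnvS
  obtain ⟨t, ht⟩ := h₀.exists_smul_vadd_mem hk hxW₀ hx0
  obtain ⟨e, k, h⟩ := hS.exists_isSphericalAlong hW (W.smul_mem t hx) ht
  obtain rfl := (h₀.inner_eq_and_eq h hk hxW₀ hx hx0).2
  exact ⟨e, h⟩

end HasCircularPlaneSections

lemma exists_linearMap_of_forall_isSphericalAlong (hV : 1 < Module.rank ℝ V) (hk : 0 < k)
    (h : ∀ W : Submodule ℝ V, finrank ℝ W = 2 → ∃ e, IsSphericalAlong S m W e k) :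
    ∃ ℓ : V →ₗ[ℝ] ℝ, ∀ x, x +ᵥ m ∈ S ↔ ‖x‖ ^ 2 - 2 * ℓ x = k := by
  choose W hW hxW _ using fun x : V ↦ exists_finrank_eq_two_mem_mem hV x x
  choose e he using fun x : V ↦ h (W x) (hW x)
  have hlin : IsLinearMap ℝ fun x ↦ ⟪e x, x⟫ := by
    refine isLinearMap_of_forall_finrank_eq_two hV fun W' hW' ↦ ?_
    obtain ⟨e', he'⟩ := h W' hW'
    refine ⟨innerₗ V e', fun x hx ↦ ?_⟩
    rcases eq_or_ne x 0 with rfl | hx0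
    · simp
    · exact ((he x).inner_eq_and_eq he' hk (hxW x) hx hx0).1
  exact ⟨hlin.mk' _, fun x ↦ he x x (hxW x)⟩

lemma exists_eq_sphere_of_linearMap [FiniteDimensional ℝ V] (hk : 0 < k) (ℓ : V →ₗ[ℝ] ℝ)
    (h : ∀ x, x +ᵥ m ∈ S ↔ ‖x‖ ^ 2 - 2 * ℓ x = k) :
    ∃ (c : P) (r : ℝ), 0 < r ∧ S = Metric.sphere c r := by
  obtain ⟨e, he⟩ := (InnerProductSpace.toDual ℝ V).surjective ℓ.toContinuousLinearMap
  have hℓ (x : V) : ℓ x = ⟪e, x⟫ := by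
    rw [← InnerProductSpace.toDual_apply_apply, he, LinearMap.coe_toContinuousLinearMap']
  refine ⟨e +ᵥ m, √(k + ‖e‖ ^ 2), by positivity, Set.ext fun y ↦ ?_⟩
  obtain ⟨x, rfl⟩ : ∃ x : V, x +ᵥ m = y := ⟨y -ᵥ m, vsub_vadd y m⟩
  rw [h, vadd_mem_sphere_iff (Real.sqrt_nonneg _), Real.sq_sqrt (by positivity),
    add_sub_cancel_right, hℓ]

theorem sphere_rigidity_general [FiniteDimensional ℝ V] (hV : 1 < Module.rank ℝ V)
    (hne : S.Nontrivial) (hS : HasCircularPlaneSections S) :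
    ∃ (c : P) (r : ℝ), 0 < r ∧ S = Metric.sphere c r := by
  obtain ⟨m, v, hv, hvS, hnvS⟩ := exists_ne_zero_vadd_mem_neg_vadd_mem ℝ hne
  have hk : 0 < ‖v‖ ^ 2 := by positivity
  obtain ⟨ℓ, hℓ⟩ := exists_linearMap_of_forall_isSphericalAlong hV hk fun W hW ↦
    hS.exists_isSphericalAlong_norm_sq hV hv hvS hnvS hW
  exact exists_eq_sphere_of_linearMap hk ℓ hℓ

end SphericalSections

section Surfaces

variable {S : Set E3}

lemma IsRegularSurface.nontrivial (hreg : IsRegularSurface S) (hne : S.Nonempty) :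
    S.Nontrivial := by
  obtain ⟨p, hp⟩ := hne
  obtain ⟨f, U, hU, -, -, ⟨u, hu, -⟩, ⟨W, -, hW⟩, φ, hφ⟩ := hreg p hp
  have hUinf : U.Infinite := infinite_of_mem_nhds u (hU.mem_nhds hu)
  have hf : Set.InjOn f U := fun x hx y hy hxy ↦ by
    have : φ ⟨x, hx⟩ = φ ⟨y, hy⟩ := Subtype.ext (by rw [hφ, hφ, hxy])
    exact congrArg Subtype.val (φ.injective this)
  refine (hUinf.nontrivial.image_of_injOn hf).mono ?_
  rw [hW]
  exact Set.inter_subset_right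

lemma PropertyP.hasCircularPlaneSections (hP : PropertyP S) : HasCircularPlaneSections S := by
  intro Pl hPl hmeet
  obtain ⟨c, r, -, -, hcirc⟩ := hP Pl hPl hmeet
  exact ⟨c, r, by rw [hcirc]; rfl⟩

end Surfaces

/-- A nonempty connected regular surface in ℝ³ satisfying property 𝒫
is a Euclidean sphere. -/
theorem sphere_rigidity (S : Set E3) (hne : S.Nonempty) (hconn : IsConnected S)
    (hreg : IsRegularSurface S) (hP : PropertyP S) :
    ∃ (c : E3) (r : ℝ), 0 < r ∧ S = {x : E3 | ‖x - c‖ = r} := by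
  have hrank : 1 < Module.rank ℝ E3 := one_lt_rank_of_one_lt_finrank (by simp)
  obtain ⟨c, r, hr, hS⟩ :=
    sphere_rigidity_general hrank (hreg.nontrivial hne) hP.hasCircularPlaneSections
  exact ⟨c, r, hr, by simpa only [Metric.sphere, dist_eq_norm] using hS⟩
end
end

section
/- Let S be a nonempty connected spacelike regular surface in Minkowski space 𝕃³ satisfying property 𝒫*. Then S is a hyperbolic plane: there exist c ∈ ℝ³, r > 0 and a sign ε ∈ {+1, −1} such that S = {x ∈ ℝ³ | ⟨x − c, x − c⟩₁ = −r² and ε(x₃ − c₃) > 0}. -/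
noncomputable section

open Module
open scoped RealInnerProductSpace

/-!
Fix a point `p` of `S`. A timelike vector `n` is the normal of a spacelike plane through `p`, and
the circle condition in that plane reads `p + y ∈ S ↔ ⟨y, y⟩ = 2⟨d, y⟩` for `y ⊥ n`, with `d`
depending on `n`. Two such planes share a line, which meets `S` in the same second point, so the
functionals `⟨d, ·⟩` agree on it and glue to a single linear functional `⟨c - p, ·⟩`. Every
spacelike vector has a timelike normal, so among the points spacelike separated from `p` the set
`S` is exactly the quadric `⟨x - c, x - c⟩ = ⟨p - c, p - c⟩`.

Since the tangent plane at `p` is spacelike, all points of `S` near `p` are spacelike separated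
from `p`. On them `2⟨p - c, x - p⟩ = -⟨x - p, x - p⟩ < 0`, so `⟨p - c, ·⟩` is maximal at `p` along
`S`; hence `p - c` is orthogonal to the spacelike tangent plane and is timelike. The quadric is thus
a hyperboloid of two sheets. Any point of the sheet through `p` is spacelike separated from `p`, so
this sheet is contained in `S`, is closed and is open in `S`, and connectedness gives equality.
-/

open Filter
open scoped Topology

section General

-- The image of the unit sphere under the derivative is compact, hence has a uniform distance to
-- the complement of the cone, and this distance absorbs the error of the linear approximation.
theorem eventually_sub_mem_of_hasFDerivAt {E F : Type*} [NormedAddCommGroup E] [NormedSpace ℝ E]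
    [FiniteDimensional ℝ E] [NormedAddCommGroup F] [NormedSpace ℝ F] {f : E → F} {f' : E →L[ℝ] F}
    {u : E} {C : Set F} (hf : HasFDerivAt f f' u) (hC : IsOpen C)
    (hsmul : ∀ t : ℝ, 0 < t → ∀ v ∈ C, t • v ∈ C) (hf' : ∀ h, h ≠ 0 → f' h ∈ C) :
    ∀ᶠ x in 𝓝[≠] u, f x - f u ∈ C := by
  have hsphere : f' '' Metric.sphere 0 1 ⊆ C := by
    rintro _ ⟨h, hh, rfl⟩
    exact hf' h (ne_zero_of_mem_unit_sphere ⟨h, hh⟩)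
  obtain ⟨δ, hδ, hthick⟩ :=
    ((isCompact_sphere (0 : E) 1).image f'.continuous).exists_thickening_subset_open hC hsphere
  filter_upwards [nhdsWithin_le_nhds (hf.isLittleO.def (half_pos hδ)), self_mem_nhdsWithin]
    with x happrox hxu
  have hpos : 0 < ‖x - u‖ := norm_pos_iff.2 (sub_ne_zero.2 hxu)
  have hscaled : ‖x - u‖⁻¹ • (f x - f u) ∈ C := by
    refine hthick (Metric.mem_thickening_iff.2
      ⟨f' (‖x - u‖⁻¹ • (x - u)), ⟨_, by simp [norm_smul, hpos.ne'], rfl⟩, ?_⟩)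
    rw [dist_eq_norm, map_smul, ← smul_sub, norm_smul, norm_inv, norm_norm]
    calc ‖x - u‖⁻¹ * ‖f x - f u - f' (x - u)‖ ≤ ‖x - u‖⁻¹ * (δ / 2 * ‖x - u‖) := by gcongr
      _ = δ / 2 := by field_simp
      _ < δ := half_lt_self hδ
  simpa [smul_smul, hpos.ne'] using hsmul _ hpos _ hscaled

theorem subset_of_isPreconnected_of_mem_nhdsWithin {X : Type*} [TopologicalSpace X] {s t : Set X}
    (hs : IsPreconnected s) (hne : (s ∩ t).Nonempty) (ht : IsClosed t)
    (hnhds : ∀ x ∈ s ∩ t, t ∈ 𝓝[s] x) : s ⊆ t := by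
  have := Subtype.preconnectedSpace hs
  have hclopen : IsClopen ((↑) ⁻¹' t : Set s) :=
    ⟨ht.preimage continuous_subtype_val, isOpen_iff_mem_nhds.2 fun x hx =>
      preimage_coe_mem_nhds_subtype.2 (hnhds x ⟨x.2, hx⟩)⟩
  obtain ⟨x, hxs, hxt⟩ := hne
  exact fun y hy => Set.eq_univ_iff_forall.1 (hclopen.eq_univ ⟨⟨x, hxs⟩, hxt⟩) ⟨y, hy⟩

theorem eq_of_forall_mul_sq_eq_mul_iff {K : Type*} [Field K] {q a b : K} (hq : q ≠ 0)
    (h : ∀ t, q * t ^ 2 = a * t ↔ q * t ^ 2 = b * t) : a = b := by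
  have ha : a * a = b * a := by
    have := (h (a / q)).1 (by field_simp)
    field_simp at this
    linear_combination this
  have hb : b * b = a * b := by
    have := (h (b / q)).2 (by field_simp)
    field_simp at this
    linear_combination this
  exact sub_eq_zero.1 (pow_eq_zero_iff two_ne_zero |>.1 (by linear_combination ha + hb))

-- The hyperplane `ker (n k)` is spanned by combinations of two basis vectors, and each of these
-- also lies in the kernel of a third coordinate form, where `ℓ k` is pinned down by agreement.
theorem exists_dual_eqOn_ker {K V ι κ : Type*} [Field K] [AddCommGroup V] [Module K V]
    (b : Basis ι K V) (hι : ∀ i j : ι, ∃ m, m ≠ i ∧ m ≠ j) {n ℓ : κ → Dual K V}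
    (hcoord : ∀ i, ∃ k, n k = b.coord i)
    (hagree : ∀ j k y, n j y = 0 → n k y = 0 → ℓ j y = ℓ k y) :
    ∃ ℓ₀ : Dual K V, ∀ k y, n k y = 0 → ℓ k y = ℓ₀ y := by
  choose σ hσ using hcoord
  choose other hother using fun i => hι i i
  have hvanish : ∀ {i j}, j ≠ i → n (σ j) (b i) = 0 := fun {i j} hji => by
    simp [hσ, hji.symm]
  let ℓ₀ : Dual K V := b.constr K fun i => ℓ (σ (other i)) (b i)
  have hbasis : ∀ {i j}, j ≠ i → ℓ (σ j) (b i) = ℓ₀ (b i) := fun {i j} hji => by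
    rw [b.constr_basis]
    exact hagree _ _ _ (hvanish hji) (hvanish (hother i).1)
  have hpair : ∀ k i m (s : K), n k (b i - s • b m) = 0 →
      ℓ k (b i - s • b m) = ℓ₀ (b i - s • b m) := fun k i m s hk => by
    obtain ⟨j, hji, hjm⟩ := hι i m
    rw [hagree k (σ j) _ hk (by simp [hvanish hji, hvanish hjm])]
    simp [hbasis hji, hbasis hjm]
  suffices hmul : ∀ k, ∃ s : K, ℓ k - ℓ₀ = s • n k by
    refine ⟨ℓ₀, fun k y hy => ?_⟩
    obtain ⟨s, hs⟩ := hmul k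
    simpa [hy, sub_eq_zero] using LinearMap.congr_fun hs y
  intro k
  by_cases hzero : ∀ i, n k (b i) = 0
  · refine ⟨0, b.ext fun i => ?_⟩
    simpa [sub_eq_zero] using hpair k i i 0 (by simp [hzero i])
  · obtain ⟨m, hm⟩ := not_forall.1 hzero
    refine ⟨(ℓ k - ℓ₀) (b m) / n k (b m), b.ext fun i => ?_⟩
    have := hpair k i m (n k (b i) / n k (b m)) (by simp [hm])
    simp only [map_sub, map_smul, smul_eq_mul, LinearMap.sub_apply, LinearMap.smul_apply] at this ⊢
    linear_combination this

end General

section Minkowski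

/-- The Minkowski form `mink` as a bilinear form, giving access to Mathlib's theory of
nondegenerate forms and dual bases. -/
def minkForm : LinearMap.BilinForm ℝ E3 :=
  LinearMap.mk₂ ℝ mink (fun x y z => by simp only [mink, PiLp.add_apply]; ring)
    (fun a x y => by simp only [mink, PiLp.smul_apply, smul_eq_mul]; ring)
    (fun x y z => by simp only [mink, PiLp.add_apply]; ring)
    (fun a x y => by simp only [mink, PiLp.smul_apply, smul_eq_mul]; ring)

theorem minkForm_apply (x y : E3) : minkForm x y = mink x y := rfl

theorem mink_comm (x y : E3) : mink x y = mink y x := by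
  simp only [mink]; ring

theorem mink_zero_left (x : E3) : mink 0 x = 0 :=
  minkForm.map_zero₂ x

theorem mink_zero_right (x : E3) : mink x 0 = 0 :=
  (minkForm x).map_zero

theorem mink_smul_right (a : ℝ) (x y : E3) : mink x (a • y) = a * mink x y :=
  (minkForm x).map_smul a y

theorem mink_smul_self (a : ℝ) (x : E3) : mink (a • x) (a • x) = a ^ 2 * mink x x := by
  simp only [mink, PiLp.smul_apply, smul_eq_mul]; ring

theorem mink_add_self (x y : E3) : mink (x + y) (x + y) = mink x x + 2 * mink x y + mink y y := by
  simp only [mink, PiLp.add_apply]; ring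

theorem mink_sub_self (x y : E3) : mink (x - y) (x - y) = mink x x - 2 * mink x y + mink y y := by
  simp only [mink, PiLp.sub_apply]; ring

theorem continuous_mink_self : Continuous fun x : E3 => mink x x := by
  unfold mink; fun_prop

theorem nondegenerate_minkForm : minkForm.Nondegenerate := by
  have hleft : minkForm.SeparatingLeft := fun x hx => by
    ext i
    have := hx (EuclideanSpace.single i 1)
    fin_cases i <;> simpa [minkForm_apply, mink] using this
  exact ⟨hleft, fun y hy => hleft y fun x => (mink_comm y x).trans (hy x)⟩

theorem sq_lt_sq_of_mink_self_neg {x : E3} (hx : mink x x < 0) : x 0 ^ 2 + x 1 ^ 2 < x 2 ^ 2 := by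
  rw [mink] at hx; linarith

theorem apply_two_ne_zero_of_mink_self_neg {x : E3} (hx : mink x x < 0) : x 2 ≠ 0 := by
  intro h
  nlinarith [sq_lt_sq_of_mink_self_neg hx, sq_nonneg (x 0), sq_nonneg (x 1)]

theorem mink_neg_of_mink_self_neg {x y : E3} (hx : mink x x < 0) (hy : mink y y < 0)
    (hxy : 0 < x 2 * y 2) : mink x y < 0 := by
  have hsq : (x 0 * y 0 + x 1 * y 1) ^ 2 < (x 2 * y 2) ^ 2 :=
    calc (x 0 * y 0 + x 1 * y 1) ^ 2
        ≤ (x 0 ^ 2 + x 1 ^ 2) * (y 0 ^ 2 + y 1 ^ 2) := by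
          linarith [sq_nonneg (x 0 * y 1 - x 1 * y 0)]
      _ < x 2 ^ 2 * y 2 ^ 2 :=
          mul_lt_mul'' (sq_lt_sq_of_mink_self_neg hx) (sq_lt_sq_of_mink_self_neg hy)
            (by positivity) (by positivity)
      _ = (x 2 * y 2) ^ 2 := by ring
  exact sub_neg.2 (lt_of_pow_lt_pow_left₀ 2 hxy.le hsq)

theorem mink_self_pos_of_mink_eq_zero {n y : E3} (hn : mink n n < 0) (hny : mink n y = 0)
    (hy : y ≠ 0) : 0 < mink y y := by
  have hn' := sq_lt_sq_of_mink_self_neg hn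
  have horth : n 0 * y 0 + n 1 * y 1 = n 2 * y 2 := sub_eq_zero.1 hny
  have hxy : 0 < y 0 ^ 2 + y 1 ^ 2 := by
    by_contra! hle
    have h0 : y 0 = 0 := by nlinarith [sq_nonneg (y 0), sq_nonneg (y 1)]
    have h1 : y 1 = 0 := by nlinarith [sq_nonneg (y 0), sq_nonneg (y 1)]
    have h2 : y 2 = 0 := by
      simpa [h0, h1, apply_two_ne_zero_of_mink_self_neg hn, eq_comm] using horth
    exact hy (by ext i; fin_cases i <;> assumption)
  have hlt : n 2 ^ 2 * y 2 ^ 2 < n 2 ^ 2 * (y 0 ^ 2 + y 1 ^ 2) :=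
    calc n 2 ^ 2 * y 2 ^ 2 = (n 0 * y 0 + n 1 * y 1) ^ 2 := by rw [horth]; ring
      _ ≤ (n 0 ^ 2 + n 1 ^ 2) * (y 0 ^ 2 + y 1 ^ 2) := by
          linarith [sq_nonneg (n 0 * y 1 - n 1 * y 0)]
      _ < n 2 ^ 2 * (y 0 ^ 2 + y 1 ^ 2) := by gcongr
  have := lt_of_mul_lt_mul_left hlt (sq_nonneg _)
  rw [mink]; linarith

-- `x + y` is timelike and orthogonal to `x - y`.
theorem mink_sub_self_pos {x y : E3} (hx : mink x x < 0) (hxy : mink x x = mink y y)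
    (hsheet : 0 < x 2 * y 2) (hne : x ≠ y) : 0 < mink (x - y) (x - y) := by
  refine mink_self_pos_of_mink_eq_zero (n := x + y) ?_ ?_ (sub_ne_zero.2 hne)
  · rw [mink_add_self]
    linarith [mink_neg_of_mink_self_neg hx (hxy ▸ hx) hsheet]
  · simp only [mink, PiLp.add_apply, PiLp.sub_apply] at hxy ⊢
    linear_combination hxy

theorem exists_mink_self_neg_mink_eq_zero {y : E3} (hy : 0 < mink y y) :
    ∃ n : E3, mink n n < 0 ∧ mink n y = 0 := by
  have hxy : 0 < y 0 ^ 2 + y 1 ^ 2 := by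
    rw [mink] at hy
    nlinarith [sq_nonneg (y 2)]
  refine ⟨!₂[y 2 * y 0, y 2 * y 1, y 0 ^ 2 + y 1 ^ 2], ?_, ?_⟩
  · have := mul_pos hxy hy
    simp only [mink] at this ⊢
    simp
    linarith
  · simp [mink]; ring

-- Otherwise the form would be nonnegative on `T ⊕ ℝ n = ℝ³`, which contains the time axis.
theorem mink_self_neg_of_orthogonal {T : Submodule ℝ E3} {n : E3} (hT : finrank ℝ T = 2)
    (hpos : ∀ v ∈ T, v ≠ 0 → 0 < mink v v) (hn : n ≠ 0) (horth : ∀ v ∈ T, mink n v = 0) :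
    mink n n < 0 := by
  by_contra! hnonneg
  have hnT : n ∉ T := fun h => (hpos n h hn).ne' (horth n h)
  have htop : T ⊔ ℝ ∙ n = ⊤ := Submodule.eq_top_of_finrank_eq (by
    rw [Submodule.finrank_sup_span_singleton hnT, hT]; simp)
  obtain ⟨v, hv, w, hw, hvw⟩ := Submodule.mem_sup.1
    (htop ▸ Submodule.mem_top : EuclideanSpace.single 2 (1 : ℝ) ∈ T ⊔ ℝ ∙ n)
  obtain ⟨s, rfl⟩ := Submodule.mem_span_singleton.1 hw
  have hv0 : 0 ≤ mink v v := by
    rcases eq_or_ne v 0 with rfl | h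
    · exact (mink_zero_left 0).ge
    · exact (hpos v hv h).le
  have htime : mink (v + s • n) (v + s • n) = -1 := by rw [hvw]; simp [mink]
  rw [mink_add_self, mink_smul_right, mink_comm v n, horth v hv, mink_smul_self] at htime
  nlinarith [mul_nonneg (sq_nonneg s) hnonneg]

theorem exists_basis_mink_self_neg : ∃ b : Basis (Fin 3) ℝ E3, ∀ i, mink (b i) (b i) < 0 := by
  let v : Fin 3 → E3 := ![!₂[0, 0, 1], !₂[1, 0, 2], !₂[0, 1, 2]]
  have hv : LinearIndependent ℝ v := by
    refine Fintype.linearIndependent_iff.2 fun g hg => ?_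
    have h0 : g 1 = 0 := by simpa [v, Fin.sum_univ_three] using congrArg (· 0) hg
    have h1 : g 2 = 0 := by simpa [v, Fin.sum_univ_three] using congrArg (· 1) hg
    have h2 : g 0 = 0 := by simpa [v, Fin.sum_univ_three, h0, h1] using congrArg (· 2) hg
    intro i
    fin_cases i <;> assumption
  refine ⟨basisOfLinearIndependentOfCardEqFinrank hv (by simp), fun i => ?_⟩
  rw [coe_basisOfLinearIndependentOfCardEqFinrank]
  fin_cases i <;> simp [v, mink] <;> norm_num

end Minkowski

section Planes

theorem isSpacelikePlane_mk'_ker {n : E3} (hn : mink n n < 0) (p : E3) :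
    IsSpacelikePlane (AffineSubspace.mk' p (minkForm n).ker) := by
  rw [IsSpacelikePlane, IsPlane, AffineSubspace.direction_mk']
  have hne : minkForm n ≠ 0 := fun h => hn.ne (LinearMap.congr_fun h n)
  have hfinrank := Dual.finrank_ker_add_one_of_ne_zero hne
  rw [finrank_euclideanSpace_fin] at hfinrank
  exact ⟨by omega, fun v hv hv0 => mink_self_pos_of_mink_eq_zero hn hv hv0⟩

variable {S : Set E3} {p : E3}

theorem PropertyPStar.exists_add_mem_iff (hP : PropertyPStar S) (hp : p ∈ S) {n : E3}
    (hn : mink n n < 0) :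
    ∃ d : E3, ∀ y, mink n y = 0 → (p + y ∈ S ↔ mink y y = 2 * mink d y) := by
  obtain ⟨c, r, -, -, hcircle⟩ := hP _ (isSpacelikePlane_mk'_ker hn p)
    ⟨p, AffineSubspace.self_mem_mk' _ _, hp⟩
  have hmem : ∀ y, mink n y = 0 → (p + y ∈ S ↔ mink (y - (c - p)) (y - (c - p)) = r ^ 2) := by
    intro y hy
    have hplane : p + y ∈ AffineSubspace.mk' p (minkForm n).ker := by
      simpa [AffineSubspace.mem_mk', minkForm_apply] using hy
    rw [sub_sub_eq_add_sub, add_comm y p]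
    simpa only [Set.mem_inter_iff, Set.mem_ofPred_eq, SetLike.mem_coe, hplane, true_and] using
      Set.ext_iff.1 hcircle (p + y)
  have hradius : mink (c - p) (c - p) = r ^ 2 := by
    have := (hmem 0 (mink_zero_right n)).1 (by simpa using hp)
    rwa [mink_sub_self, mink_zero_left, mink_zero_left, mul_zero, sub_zero, zero_add] at this
  refine ⟨c - p, fun y hy => ?_⟩
  rw [hmem y hy, mink_sub_self, hradius, mink_comm y (c - p)]
  constructor <;> intro h <;> linarith

-- Along the line `p + ℝ y` each of the two planes sees the same second point of intersection.
theorem mink_eq_of_forall_add_mem_iff {n n' d d' y : E3} (hn : mink n n < 0)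
    (hd : ∀ y, mink n y = 0 → (p + y ∈ S ↔ mink y y = 2 * mink d y))
    (hd' : ∀ y, mink n' y = 0 → (p + y ∈ S ↔ mink y y = 2 * mink d' y))
    (hy : mink n y = 0) (hy' : mink n' y = 0) : mink d y = mink d' y := by
  rcases eq_or_ne y 0 with rfl | hy0
  · rw [mink_zero_right, mink_zero_right]
  refine mul_left_cancel₀ two_ne_zero (eq_of_forall_mul_sq_eq_mul_iff
    (mink_self_pos_of_mink_eq_zero hn hy hy0).ne' fun t => ?_)
  have h := hd (t • y) (by rw [mink_smul_right, hy, mul_zero])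
  rw [hd' (t • y) (by rw [mink_smul_right, hy', mul_zero])] at h
  rw [mink_smul_self, mink_smul_right, mink_smul_right] at h
  convert h.symm using 2 <;> ring

theorem PropertyPStar.exists_mem_iff_mink_sub_self_eq (hP : PropertyPStar S) (hp : p ∈ S) :
    ∃ c : E3, ∀ x, 0 < mink (x - p) (x - p) →
      (x ∈ S ↔ mink (x - c) (x - c) = mink (p - c) (p - c)) := by
  choose d hd using fun n : {n : E3 // mink n n < 0} => hP.exists_add_mem_iff hp n.2
  obtain ⟨b, hb⟩ := exists_basis_mink_self_neg
  obtain ⟨ℓ, hℓ⟩ := exists_dual_eqOn_ker (minkForm.dualBasis nondegenerate_minkForm b)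
    (by decide) (n := fun n : {n : E3 // mink n n < 0} => minkForm n) (ℓ := fun n => minkForm (d n))
    (fun i => ⟨⟨b i, hb i⟩, LinearMap.ext fun x => by
      rw [Basis.coord_apply, LinearMap.BilinForm.dualBasis_repr_apply]; exact mink_comm _ _⟩)
    (fun n n' y => mink_eq_of_forall_add_mem_iff n.2 (hd n) (hd n'))
  let d₀ := (minkForm.toDual nondegenerate_minkForm).symm ℓ
  have hd₀ : ∀ y, mink d₀ y = ℓ y :=
    LinearMap.BilinForm.apply_toDual_symm_apply (hB := nondegenerate_minkForm) ℓ
  refine ⟨p + d₀, fun x hx => ?_⟩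
  obtain ⟨n, hn, hnx⟩ := exists_mink_self_neg_mink_eq_zero hx
  have hmem := hd ⟨n, hn⟩ (x - p) hnx
  rw [add_sub_cancel, ← minkForm_apply (d _), hℓ ⟨n, hn⟩ _ hnx, ← hd₀] at hmem
  rw [hmem, ← sub_sub, mink_sub_self (x - p), mink_comm _ d₀, sub_add_cancel_left]
  have hneg : mink (-d₀) (-d₀) = mink d₀ d₀ := by simp [mink]
  rw [hneg]
  constructor <;> intro h <;> linarith

end Planes

section Charts

/-- `S` is a spacelike regular surface near the point `p`: this is the condition that
`IsSpacelikeSurface` imposes at every point of `S`. -/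
def IsSpacelikeAt (S : Set E3) (p : E3) : Prop :=
  ∃ f U, IsChartAt S p f U ∧
    ∀ u ∈ U, f u = p →
      finrank ℝ (TangentPlane f u) = 2 ∧ ∀ v ∈ TangentPlane f u, v ≠ 0 → 0 < mink v v

variable {S : Set E3} {p : E3}

theorem IsChartAt.mem {f : E2 → E3} {U : Set E2} (h : IsChartAt S p f U) : p ∈ S := by
  obtain ⟨-, -, -, hp, ⟨W, -, hWS⟩, -⟩ := h
  exact (hWS ▸ hp : p ∈ W ∩ S).2

theorem IsChartAt.exists_map_nhds_eq {f : E2 → E3} {U : Set E2} (h : IsChartAt S p f U) :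
    ∃ u ∈ U, f u = p ∧ map f (𝓝 u) = 𝓝[S] p := by
  obtain ⟨hU, -, -, ⟨u, hu, rfl⟩, ⟨W, hW, hWS⟩, φ, hφ⟩ := h
  refine ⟨u, hu, rfl, ?_⟩
  have hfW : f u ∈ W := (hWS ▸ Set.mem_image_of_mem f hu : f u ∈ W ∩ S).1
  have hφu : φ ⟨u, hu⟩ = ⟨f u, Set.mem_image_of_mem f hu⟩ := Subtype.ext (hφ ⟨u, hu⟩)
  calc map f (𝓝 u) = map (f ∘ (↑)) (𝓝 (⟨u, hu⟩ : U)) := by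
        rw [← map_map, map_nhds_subtype_coe_eq_nhds hu (hU.mem_nhds hu)]
    _ = map ((↑) ∘ φ) (𝓝 (⟨u, hu⟩ : U)) := by rw [show f ∘ (↑) = (↑) ∘ φ from (funext hφ).symm]
    _ = 𝓝[f '' U] f u := by
        rw [← map_map, φ.map_nhds_eq, hφu, ← nhdsWithin_eq_map_subtype_coe]
    _ = 𝓝[S] f u := by
        rw [hWS, nhdsWithin_inter_of_mem (mem_nhdsWithin_of_mem_nhds (hW.mem_nhds hfW))]

theorem IsSpacelikeAt.exists_param (h : IsSpacelikeAt S p) :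
    ∃ (f : E2 → E3) (u : E2), f u = p ∧ map f (𝓝 u) = 𝓝[S] p ∧ DifferentiableAt ℝ f u ∧
      finrank ℝ (TangentPlane f u) = 2 ∧ (∀ v ∈ TangentPlane f u, v ≠ 0 → 0 < mink v v) ∧
      ∀ᶠ x in 𝓝[≠] u, 0 < mink (f x - p) (f x - p) := by
  obtain ⟨f, U, hchart, hspace⟩ := h
  obtain ⟨u, hu, hfu, hmap⟩ := hchart.exists_map_nhds_eq
  obtain ⟨hU, hsmooth, hinj, -⟩ := hchart
  obtain ⟨hfinrank, hpos⟩ := hspace u hu hfu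
  have hdiff : DifferentiableAt ℝ f u :=
    (hsmooth.contDiffAt (hU.mem_nhds hu)).differentiableAt (by simp)
  refine ⟨f, u, hfu, hmap, hdiff, hfinrank, hpos, ?_⟩
  rw [← hfu]
  refine eventually_sub_mem_of_hasFDerivAt (C := {v | 0 < mink v v}) hdiff.hasFDerivAt
    (isOpen_lt continuous_const continuous_mink_self) (fun t ht v hv => ?_) fun h hh => ?_
  · rw [Set.mem_ofPred_eq, mink_smul_self]
    exact mul_pos (pow_pos ht 2) hv
  · exact hpos _ ⟨h, rfl⟩ ((map_ne_zero_iff _ (hinj u hu)).2 hh)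

theorem IsSpacelikeAt.eventually_mink_sub_self_pos (h : IsSpacelikeAt S p) :
    ∀ᶠ q in 𝓝[S] p, q ≠ p → 0 < mink (q - p) (q - p) := by
  obtain ⟨f, u, hfu, hmap, -, -, -, hpos⟩ := h.exists_param
  rw [← hmap, eventually_map]
  filter_upwards [eventually_nhdsWithin_iff.1 hpos] with x hx hxp
  exact hx fun hxu => hxp (by rw [hxu, hfu])

-- If `mink n` is negative on the nearby points of `S`, it has a local maximum at `p`, hence its
-- derivative vanishes on the tangent plane.
theorem IsSpacelikeAt.mink_self_neg {n : E3} (h : IsSpacelikeAt S p)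
    (hn : ∀ᶠ q in 𝓝[S] p, q ≠ p → mink n (q - p) < 0) : mink n n < 0 := by
  obtain ⟨f, u, hfu, hmap, hdiff, hfinrank, hpos, hnear⟩ := h.exists_param
  rw [← hmap, eventually_map] at hn
  have hn0 : n ≠ 0 := by
    rintro rfl
    obtain ⟨x, hx, hxp⟩ := (hnear.and (nhdsWithin_le_nhds hn)).exists
    refine (hxp fun hfx => hx.ne' ?_).ne (mink_zero_left _)
    rw [hfx, sub_self, mink_zero_left]
  have hmax : IsLocalMax (fun x => (minkForm n).toContinuousLinearMap (f x - p)) u := by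
    filter_upwards [hn] with x hx
    rcases eq_or_ne (f x) p with hxp | hxp
    · rw [hxp, hfu]
    · simpa [hfu, minkForm_apply, mink_zero_right] using (hx hxp).le
  have hderiv := hmax.hasFDerivAt_eq_zero
    ((minkForm n).toContinuousLinearMap.hasFDerivAt.comp u (hdiff.hasFDerivAt.sub_const p))
  refine mink_self_neg_of_orthogonal hfinrank hpos hn0 ?_
  rintro _ ⟨h, rfl⟩
  exact congrArg (· h) hderiv

end Charts

section Sheet

/-- The sheet through `p` of the hyperboloid centred at `c`. Points on the sheet of `p` are
singled out by `x 2 - c 2` and `p 2 - c 2` having the same sign. -/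
def hyperboloidSheet (c p : E3) : Set E3 :=
  {x | mink (x - c) (x - c) = mink (p - c) (p - c) ∧ 0 < (x 2 - c 2) * (p 2 - c 2)}

variable {S : Set E3} {c p x : E3}

theorem self_mem_hyperboloidSheet (h : mink (p - c) (p - c) < 0) : p ∈ hyperboloidSheet c p :=
  ⟨rfl, mul_self_pos.2 (apply_two_ne_zero_of_mink_self_neg h)⟩

theorem isClosed_hyperboloidSheet (h : mink (p - c) (p - c) < 0) :
    IsClosed (hyperboloidSheet c p) := by
  have heq : hyperboloidSheet c p = {x | mink (x - c) (x - c) = mink (p - c) (p - c)} ∩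
      {x | 0 ≤ (x 2 - c 2) * (p 2 - c 2)} := by
    ext x
    refine and_congr_right fun hx => ⟨le_of_lt, fun hle => hle.lt_of_ne' ?_⟩
    exact mul_ne_zero (apply_two_ne_zero_of_mink_self_neg (hx ▸ h))
      (apply_two_ne_zero_of_mink_self_neg h)
  rw [heq]
  exact (isClosed_eq (continuous_mink_self.comp (by fun_prop)) continuous_const).inter
    (isClosed_le continuous_const (by fun_prop))

theorem mink_sub_self_pos_of_mem_hyperboloidSheet (h : mink (p - c) (p - c) < 0)
    (hx : x ∈ hyperboloidSheet c p) (hxp : x ≠ p) : 0 < mink (x - p) (x - p) := by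
  rw [← sub_sub_sub_cancel_right x p c]
  exact mink_sub_self_pos (hx.1 ▸ h) hx.1 hx.2 (mt sub_left_inj.1 hxp)

theorem exists_hyperboloidSheet_eq (h : mink (p - c) (p - c) < 0) :
    ∃ r ε : ℝ, 0 < r ∧ (ε = 1 ∨ ε = -1) ∧
      hyperboloidSheet c p = {x | mink (x - c) (x - c) = -r ^ 2 ∧ 0 < ε * (x 2 - c 2)} := by
  have hr : -√(-mink (p - c) (p - c)) ^ 2 = mink (p - c) (p - c) := by
    rw [Real.sq_sqrt (by linarith), neg_neg]
  have hr0 : 0 < √(-mink (p - c) (p - c)) := Real.sqrt_pos.2 (neg_pos.2 h)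
  rcases (apply_two_ne_zero_of_mink_self_neg h).lt_or_gt with hneg | hpos
  · refine ⟨_, -1, hr0, .inr rfl, ?_⟩
    ext x
    rw [hr, Set.mem_ofPred_eq, neg_one_mul, neg_pos]
    exact and_congr_right fun _ =>
      ⟨fun hx => neg_of_mul_pos_left hx hneg.le, fun hx => mul_pos_of_neg_of_neg hx hneg⟩
  · refine ⟨_, 1, hr0, .inl rfl, ?_⟩
    ext x
    rw [hr, Set.mem_ofPred_eq, one_mul]
    exact and_congr_right fun _ => mul_pos_iff_of_pos_right hpos

theorem hyperboloidSheet_subset (h : mink (p - c) (p - c) < 0) (hp : p ∈ S)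
    (hc : ∀ x, 0 < mink (x - p) (x - p) →
      (x ∈ S ↔ mink (x - c) (x - c) = mink (p - c) (p - c))) :
    hyperboloidSheet c p ⊆ S := by
  intro x hx
  rcases eq_or_ne x p with rfl | hxp
  · exact hp
  · exact (hc x (mink_sub_self_pos_of_mem_hyperboloidSheet h hx hxp)).2 hx.1

theorem hyperboloidSheet_mem_nhdsWithin (h : mink (p - c) (p - c) < 0)
    (hnear : ∀ᶠ q in 𝓝[S] p, q ≠ p → 0 < mink (q - p) (q - p))
    (hc : ∀ x, 0 < mink (x - p) (x - p) →
      (x ∈ S ↔ mink (x - c) (x - c) = mink (p - c) (p - c)))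
    (hx : x ∈ hyperboloidSheet c p) : hyperboloidSheet c p ∈ 𝓝[S] x := by
  have hspace : ∀ᶠ q in 𝓝[S] x, q ≠ p → 0 < mink (q - p) (q - p) := by
    rcases eq_or_ne x p with rfl | hxp
    · exact hnear
    · have hopen : IsOpen {q : E3 | 0 < mink (q - p) (q - p)} :=
        isOpen_lt continuous_const (continuous_mink_self.comp (by fun_prop))
      filter_upwards [mem_nhdsWithin_of_mem_nhds
        (hopen.mem_nhds (mink_sub_self_pos_of_mem_hyperboloidSheet h hx hxp))] with q hq _ using hq
  have hside : IsOpen {q : E3 | 0 < (q 2 - c 2) * (p 2 - c 2)} :=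
    isOpen_lt continuous_const (by fun_prop)
  filter_upwards [self_mem_nhdsWithin, hspace, mem_nhdsWithin_of_mem_nhds (hside.mem_nhds hx.2)]
    with q hqS hq hqside
  rcases eq_or_ne q p with rfl | hqp
  · exact self_mem_hyperboloidSheet h
  · exact ⟨(hc q (hq hqp)).1 hqS, hqside⟩

end Sheet

theorem hyperbolic_rigidity_general {S : Set E3} {p : E3} (hconn : IsPreconnected S)
    (hreg : IsSpacelikeAt S p) (hP : PropertyPStar S) :
    ∃ (c : E3) (r ε : ℝ), 0 < r ∧ (ε = 1 ∨ ε = -1) ∧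
      S = {x : E3 | mink (x - c) (x - c) = -r ^ 2 ∧ 0 < ε * (x 2 - c 2)} := by
  have hp : p ∈ S := by
    obtain ⟨f, U, hchart, -⟩ := hreg
    exact hchart.mem
  obtain ⟨c, hc⟩ := hP.exists_mem_iff_mink_sub_self_eq hp
  have hnear := hreg.eventually_mink_sub_self_pos
  have htimelike : mink (p - c) (p - c) < 0 := by
    refine hreg.mink_self_neg ?_
    filter_upwards [hnear, self_mem_nhdsWithin] with q hq hqS hqp
    have hquadric := (hc q (hq hqp)).1 hqS
    rw [← sub_add_sub_cancel q p c, mink_add_self, mink_comm (q - p) (p - c)] at hquadric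
    linarith [hq hqp]
  have hS : S = hyperboloidSheet c p :=
    (subset_of_isPreconnected_of_mem_nhdsWithin hconn
      ⟨p, hp, self_mem_hyperboloidSheet htimelike⟩ (isClosed_hyperboloidSheet htimelike)
      fun x hx => hyperboloidSheet_mem_nhdsWithin htimelike hnear hc hx.2).antisymm
      (hyperboloidSheet_subset htimelike hp hc)
  rw [hS]
  exact ⟨c, exists_hyperboloidSheet_eq htimelike⟩

/-- A nonempty connected spacelike regular surface in 𝕃³ satisfying
property 𝒫* is a hyperbolic plane. -/
theorem hyperbolic_rigidity (S : Set E3) (hne : S.Nonempty) (hconn : IsConnected S)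
    (hreg : IsSpacelikeSurface S) (hP : PropertyPStar S) :
    ∃ (c : E3) (r ε : ℝ), 0 < r ∧ (ε = 1 ∨ ε = -1) ∧
      S = {x : E3 | mink (x - c) (x - c) = -r ^ 2 ∧ 0 < ε * (x 2 - c 2)} := by
  obtain ⟨p, hp⟩ := hne
  exact hyperbolic_rigidity_general hconn.isPreconnected (hreg p hp) hP
end
end

section
/- Let L be a line in ℝ³, let Π₀ be a plane perpendicular to L, let P = L ∩ Π₀, let C be a circle in Π₀ with center P and radius ρ > 0, let Q ∈ L with Q ∉ Π₀, and let Σ be the unique Euclidean sphere containing C ∪ {Q}. Then for every plane Π containing L, every circle in Π of positive radius that passes through Q and through the two points of Π ∩ C is contained in Σ and has the same radius as Σ; moreover, Σ equals the union over all planes Π containing L of these circles. -/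
noncomputable section

open Module
open scoped RealInnerProductSpace

/-! A sphere containing the whole of a sphere about `p` in an affine subspace `N` has its center on
the orthogonal complement of `N` through `p`, because it contains antipodal points `p ± u` in every
direction `u` of `N`. Applied inside the whole space this puts the center of `Σ` on the axis `L`;
applied inside a plane `Pl ⊇ L`, where `Pl ∩ C` is a pair of antipodal points, it puts the center of
the circle on `L` as well. A point of `L` equidistant from `Q` and from a point of `C` is unique, so
the two centers agree: the circles in question are exactly the sections of `Σ` by planes
through `L`, and these planes cover the space. -/

section Dimension

variable {k V P : Type*} [DivisionRing k] [AddCommGroup V] [Module k V] [AddTorsor V P]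

theorem finrank_direction_affineSpan_insert {s : AffineSubspace k P}
    [FiniteDimensional k s.direction] (hs : (s : Set P).Nonempty) {x : P} (hx : x ∉ s) :
    finrank k (affineSpan k (insert x (s : Set P))).direction = finrank k s.direction + 1 := by
  have hlt : s < affineSpan k (insert x (s : Set P)) :=
    SetLike.lt_iff_le_and_exists.2 ⟨fun y hy => subset_affineSpan k _ (Set.mem_insert_of_mem x hy),
      x, subset_affineSpan k _ (Set.mem_insert x _), hx⟩
  have : FiniteDimensional k (affineSpan k (insert x (s : Set P))).direction := by
    obtain ⟨p, hp⟩ := hs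
    rw [AffineSubspace.direction_affineSpan_insert hp]
    infer_instance
  refine le_antisymm ?_
    (Submodule.finrank_lt_finrank_of_lt (AffineSubspace.direction_lt_of_nonempty hlt hs))
  rw [direction_affineSpan]
  exact finrank_vectorSpan_insert_le s x

theorem exists_le_mem_finrank_direction_eq_add_one {s : AffineSubspace k P}
    [FiniteDimensional k s.direction] (hs : (s : Set P).Nonempty) (hs' : s ≠ ⊤) (x : P) :
    ∃ t, s ≤ t ∧ x ∈ t ∧ finrank k t.direction = finrank k s.direction + 1 := by
  obtain ⟨y, hys, hxy⟩ : ∃ y ∉ s, x ∈ s ∨ x = y := by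
    by_cases hx : x ∈ s
    · obtain ⟨y, -, hy⟩ := SetLike.exists_of_lt hs'.lt_top
      exact ⟨y, hy, .inl hx⟩
    · exact ⟨x, hx, .inr rfl⟩
  have hle : s ≤ affineSpan k (insert y (s : Set P)) := fun z hz =>
    subset_affineSpan k _ (Set.mem_insert_of_mem y hz)
  refine ⟨_, hle, ?_, finrank_direction_affineSpan_insert hs hys⟩
  rcases hxy with hx | rfl
  · exact hle hx
  · exact subset_affineSpan k _ (Set.mem_insert x _)

theorem affineSpan_pair_eq_of_finrank_direction_eq_one {L : AffineSubspace k P}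
    (hL : finrank k L.direction = 1) {p q : P} (hp : p ∈ L) (hq : q ∈ L) (hpq : p ≠ q) :
    line[k, p, q] = L := by
  have : FiniteDimensional k L.direction := Module.finite_of_finrank_eq_succ hL
  refine AffineSubspace.eq_of_direction_eq_of_nonempty_of_le ?_
    ⟨p, left_mem_affineSpan_pair k p q⟩ (affineSpan_pair_le_of_mem_of_mem hp hq)
  refine Submodule.eq_of_le_of_finrank_eq
    (AffineSubspace.direction_le (affineSpan_pair_le_of_mem_of_mem hp hq)) ?_
  rw [direction_affineSpan, vectorSpan_pair_rev, hL]
  exact finrank_span_singleton (vsub_ne_zero.2 hpq.symm)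

end Dimension

theorem eq_orthogonal_of_isOrtho_of_finrank_add {V : Type*} [NormedAddCommGroup V]
    [InnerProductSpace ℝ V] [FiniteDimensional ℝ V] {K K' : Submodule ℝ V} (h : K ⟂ K')
    (hfinrank : finrank ℝ K + finrank ℝ K' = finrank ℝ V) : K' = Kᗮ :=
  Submodule.eq_of_le_of_finrank_eq h.symm
    (Submodule.finrank_add_finrank_orthogonal' hfinrank).symm

section Sphere

open Metric

variable {V P : Type*} [NormedAddCommGroup V] [InnerProductSpace ℝ V] [MetricSpace P]
  [NormedAddTorsor V P]

theorem inter_sphere_nonempty {s : AffineSubspace ℝ P} (hs : s.direction ≠ ⊥) {p : P}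
    (hp : p ∈ s) {ρ : ℝ} (hρ : 0 ≤ ρ) : ((s : Set P) ∩ sphere p ρ).Nonempty := by
  have : Nontrivial s.direction := Submodule.nontrivial_iff_ne_bot.2 hs
  obtain ⟨v, hv⟩ := exists_norm_eq s.direction hρ
  exact ⟨(v : V) +ᵥ p, AffineSubspace.vadd_mem_of_mem_direction v.2 hp, by simpa using hv⟩

theorem vsub_mem_orthogonal_direction_of_inter_sphere_subset {s : AffineSubspace ℝ P} {p c : P}
    {ρ r : ℝ} (hp : p ∈ s) (hρ : 0 < ρ) (h : (s : Set P) ∩ sphere p ρ ⊆ sphere c r) :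
    c -ᵥ p ∈ s.directionᗮ := by
  rw [Submodule.mem_orthogonal']
  intro v hv
  rcases eq_or_ne v 0 with rfl | hv0
  · exact inner_zero_right _
  set u : V := (ρ / ‖v‖) • v
  have hu : u ∈ s.direction := s.direction.smul_mem _ hv
  have hnorm : ‖u‖ = ρ := by
    rw [norm_smul, Real.norm_of_nonneg (by positivity), div_mul_cancel₀ _ (norm_ne_zero_iff.2 hv0)]
  have hmem : ∀ w ∈ s.direction, ‖w‖ = ρ → dist (w +ᵥ p) c = r := fun w hw hwρ =>
    h ⟨AffineSubspace.vadd_mem_of_mem_direction hw hp, by simpa using hwρ⟩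
  have hinner : ⟪c -ᵥ p, (u +ᵥ p) -ᵥ (-u +ᵥ p)⟫ = 0 :=
    EuclideanGeometry.inner_vsub_vsub_of_dist_eq_of_dist_eq (by simp)
      ((hmem (-u) (neg_mem hu) (by rwa [norm_neg])).trans (hmem u hu hnorm).symm)
  rw [vadd_vsub_vadd_cancel_right, sub_neg_eq_add, inner_add_right, add_self_eq_zero,
    real_inner_smul_right] at hinner
  exact (mul_eq_zero.1 hinner).resolve_left (by positivity)

theorem center_mem_of_inf_inter_sphere_subset {L S N : AffineSubspace ℝ P}
    [L.direction.HasOrthogonalProjection] (hN : N.direction = L.directionᗮ) (hLS : L ≤ S)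
    {p c : P} {ρ r : ℝ} (hpL : p ∈ L) (hpN : p ∈ N) (hρ : 0 < ρ) (hc : c ∈ S)
    (h : ((S ⊓ N : AffineSubspace ℝ P) : Set P) ∩ sphere p ρ ⊆ sphere c r) : c ∈ L := by
  have hcp : c -ᵥ p ∈ (S ⊓ N).directionᗮ :=
    vsub_mem_orthogonal_direction_of_inter_sphere_subset ⟨hLS hpL, hpN⟩ hρ h
  rw [AffineSubspace.direction_inf_of_mem (hLS hpL) hpN, hN, inf_comm] at hcp
  have hcS : c -ᵥ p ∈ S.direction := AffineSubspace.vsub_mem_direction hc (hLS hpL)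
  rw [← Submodule.sup_orthogonal_inf_of_hasOrthogonalProjection
    (AffineSubspace.direction_le hLS)] at hcS
  obtain ⟨a, ha, b, hb, hab⟩ := Submodule.mem_sup.1 hcS
  have hb0 : b = 0 := by
    have hinner : ⟪b, a + b⟫ = 0 := hab ▸ hcp b hb
    rwa [inner_add_right, Submodule.inner_left_of_mem_orthogonal ha hb.1, zero_add,
      inner_self_eq_zero] at hinner
  rw [← AffineSubspace.vsub_right_mem_direction_iff_mem hpL, ← hab, hb0, add_zero]
  exact ha

theorem eq_of_mem_affineSpan_pair_of_dist_eq {p q x c₁ c₂ : P} (hx : ⟪q -ᵥ p, x -ᵥ p⟫ = 0)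
    (hc₁ : c₁ ∈ line[ℝ, p, q]) (hc₂ : c₂ ∈ line[ℝ, p, q]) (h₁ : dist x c₁ = dist q c₁)
    (h₂ : dist x c₂ = dist q c₂) : c₁ = c₂ := by
  have hdir : c₂ -ᵥ c₁ ∈ ℝ ∙ (q -ᵥ p) := by
    rw [← vectorSpan_pair_rev, ← direction_affineSpan]
    exact AffineSubspace.vsub_mem_direction hc₂ hc₁
  obtain ⟨t, ht⟩ := Submodule.mem_span_singleton.1 hdir
  have hinner : ⟪c₂ -ᵥ c₁, q -ᵥ p⟫ = 0 := by
    have hqx := EuclideanGeometry.inner_vsub_vsub_of_dist_eq_of_dist_eq h₁ h₂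
    have hcx : ⟪c₂ -ᵥ c₁, x -ᵥ p⟫ = 0 := by rw [← ht, real_inner_smul_left, hx, mul_zero]
    rwa [← vsub_sub_vsub_cancel_right q x p, inner_sub_right, hcx, sub_zero] at hqx
  have hzero : ⟪c₂ -ᵥ c₁, c₂ -ᵥ c₁⟫ = 0 := by
    rw [← ht, real_inner_smul_right, ht, hinner, mul_zero]
  exact (vsub_eq_zero_iff_eq.1 (inner_self_eq_zero.1 hzero)).symm

theorem center_eq_of_inf_inter_sphere_subset {p q : P} {S N : AffineSubspace ℝ P}
    (hN : N.direction = line[ℝ, p, q].directionᗮ) (hpN : p ∈ N) (hS : line[ℝ, p, q] < S)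
    {ρ : ℝ} (hρ : 0 < ρ) {c c' : P} {r r' : ℝ} (hc : c ∈ line[ℝ, p, q]) (hc' : c' ∈ S)
    (h : insert q (((S ⊓ N : AffineSubspace ℝ P) : Set P) ∩ sphere p ρ) ⊆ sphere c r)
    (h' : insert q (((S ⊓ N : AffineSubspace ℝ P) : Set P) ∩ sphere p ρ) ⊆ sphere c' r') :
    c' = c := by
  have hpL : p ∈ line[ℝ, p, q] := left_mem_affineSpan_pair ℝ p q
  have hc'L : c' ∈ line[ℝ, p, q] := center_mem_of_inf_inter_sphere_subset hN hS.le hpL hpN hρ hc'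
    ((Set.subset_insert _ _).trans h')
  have hne : (S ⊓ N).direction ≠ ⊥ := by
    rw [AffineSubspace.direction_inf_of_mem (hS.le hpL) hpN, hN, inf_comm]
    intro hbot
    have hdir := AffineSubspace.direction_lt_of_nonempty hS ⟨p, hpL⟩
    refine hdir.ne ?_
    rw [← Submodule.sup_orthogonal_inf_of_hasOrthogonalProjection hdir.le, hbot, sup_bot_eq]
  obtain ⟨x, hx⟩ := inter_sphere_nonempty hne ⟨hS.le hpL, hpN⟩ hρ.le
  have hdist : ∀ {d : P} {R : ℝ},
      insert q (((S ⊓ N : AffineSubspace ℝ P) : Set P) ∩ sphere p ρ) ⊆ sphere d R →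
        dist x d = dist q d := fun hd =>
    (hd (Set.mem_insert_of_mem q hx)).trans (hd (Set.mem_insert q _)).symm
  have hxN : x -ᵥ p ∈ line[ℝ, p, q].directionᗮ := hN ▸ AffineSubspace.vsub_mem_direction hx.1.2 hpN
  exact eq_of_mem_affineSpan_pair_of_dist_eq
    (hxN _ (AffineSubspace.vsub_mem_direction (right_mem_affineSpan_pair ℝ p q) hpL))
    hc'L hc (hdist h') (hdist h)

/-- `C` is the sphere with center `c` and radius `r ≥ 0` inside the affine subspace `s`; this is
`IsCircleIn` for an affine subspace of any dimension in any Euclidean space, with the norm of the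
difference replaced by the distance. -/
def IsSphereIn (s : AffineSubspace ℝ P) (c : P) (r : ℝ) (C : Set P) : Prop :=
  c ∈ s ∧ 0 ≤ r ∧ C = {x ∈ (s : Set P) | dist x c = r}

theorem IsSphereIn.subset_sphere {s : AffineSubspace ℝ P} {c : P} {r : ℝ} {C : Set P}
    (h : IsSphereIn s c r C) : C ⊆ sphere c r := by
  obtain ⟨-, -, rfl⟩ := h
  exact Set.inter_subset_right

theorem IsSphereIn.center_eq_and_radius_eq {p q : P} {S N : AffineSubspace ℝ P}
    (hN : N.direction = line[ℝ, p, q].directionᗮ) (hpN : p ∈ N) (hS : line[ℝ, p, q] < S)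
    {ρ : ℝ} (hρ : 0 < ρ) {C C' : Set P} (hC : IsSphereIn N p ρ C) {c c' : P} {r r' : ℝ}
    (hc : c ∈ line[ℝ, p, q]) (hCq : C ∪ {q} ⊆ sphere c r) (hC' : IsSphereIn S c' r' C')
    (hq : q ∈ C') (hsub : (S : Set P) ∩ C ⊆ C') : c' = c ∧ r' = r := by
  have hqc : dist q c = r := hCq (.inr rfl)
  have hqc' : dist q c' = r' := hC'.subset_sphere hq
  have hSN : ((S ⊓ N : AffineSubspace ℝ P) : Set P) ∩ sphere p ρ ⊆ S ∩ C := by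
    rw [hC.2.2]
    exact fun x hx => ⟨hx.1.1, hx.1.2, hx.2⟩
  obtain rfl : c' = c := center_eq_of_inf_inter_sphere_subset hN hpN hS hρ hc hC'.1
    (Set.insert_subset hqc fun x hx => hCq (.inl (hSN hx).2))
    (Set.insert_subset hqc' (hSN.trans (hsub.trans hC'.subset_sphere)))
  exact ⟨rfl, hqc'.symm.trans hqc⟩

theorem sphere_is_union_of_circles_general {L N : AffineSubspace ℝ P}
    (hL : finrank ℝ L.direction = 1) (hLtop : L ≠ ⊤) (hN : N.direction = L.directionᗮ)
    {p q : P} (hpL : p ∈ L) (hpN : p ∈ N) {C : Set P} {ρ : ℝ} (hρ : 0 < ρ)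
    (hC : IsSphereIn N p ρ C) (hqL : q ∈ L) (hqN : q ∉ N) {c : P} {r : ℝ} (hr : 0 < r)
    (hCq : C ∪ {q} ⊆ sphere c r) :
    (∀ S : AffineSubspace ℝ P, finrank ℝ S.direction = 2 → (L : Set P) ⊆ S →
      ∀ (C' : Set P) (c' : P) (r' : ℝ), 0 < r' → IsSphereIn S c' r' C' →
        q ∈ C' → (S : Set P) ∩ C ⊆ C' → C' ⊆ sphere c r ∧ r' = r) ∧
    sphere c r =
      {x : P | ∃ S : AffineSubspace ℝ P, finrank ℝ S.direction = 2 ∧ (L : Set P) ⊆ S ∧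
        ∃ (C' : Set P) (c' : P) (r' : ℝ), 0 < r' ∧ IsSphereIn S c' r' C' ∧
          q ∈ C' ∧ (S : Set P) ∩ C ⊆ C' ∧ x ∈ C'} := by
  obtain rfl : line[ℝ, p, q] = L :=
    affineSpan_pair_eq_of_finrank_direction_eq_one hL hpL hqL (by rintro rfl; exact hqN hpN)
  have hcL : c ∈ line[ℝ, p, q] := center_mem_of_inf_inter_sphere_subset hN le_top hpL hpN hρ
    (AffineSubspace.mem_top ℝ V c) fun x hx => hCq (.inl (hC.2.2 ▸ ⟨hx.1.2, hx.2⟩))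
  have circle_eq : ∀ {S : AffineSubspace ℝ P} {C' : Set P} {c' : P} {r' : ℝ},
      finrank ℝ S.direction = 2 → line[ℝ, p, q] ≤ S → IsSphereIn S c' r' C' → q ∈ C' →
        (S : Set P) ∩ C ⊆ C' → c' = c ∧ r' = r := fun hS hLS =>
    IsSphereIn.center_eq_and_radius_eq hN hpN (hLS.lt_of_ne (by rintro rfl; omega)) hρ hC hcL hCq
  refine ⟨?_, Set.Subset.antisymm (fun x hx => ?_) ?_⟩
  · rintro S hS hLS C' c' r' - hC' hq hsub
    obtain ⟨rfl, rfl⟩ := circle_eq hS hLS hC' hq hsub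
    exact ⟨hC'.subset_sphere, rfl⟩
  · obtain ⟨S, hLS, hxS, hS⟩ := exists_le_mem_finrank_direction_eq_add_one ⟨p, hpL⟩ hLtop x
    exact ⟨S, by rw [hS, hL], hLS, _, c, r, hr, ⟨hLS hcL, hr.le, rfl⟩, ⟨hLS hqL, hCq (.inr rfl)⟩,
      fun y hy => ⟨hy.1, hCq (.inl hy.2)⟩, hxS, hx⟩
  · rintro x ⟨S, hS, hLS, C', c', r', -, hC', hq, hsub, hx⟩
    obtain ⟨rfl, rfl⟩ := circle_eq hS hLS hC' hq hsub
    exact hC'.subset_sphere hx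

end Sphere

theorem IsLine.ne_top {L : AffineSubspace ℝ E3} (hL : IsLine L) : L ≠ ⊤ := by
  rintro rfl
  rw [IsLine, AffineSubspace.direction_top, finrank_top, finrank_euclideanSpace_fin] at hL
  omega

theorem IsPlane.direction_eq_orthogonal {Pl L : AffineSubspace ℝ E3} (hPl : IsPlane Pl)
    (hL : IsLine L) (hperp : L.direction ⟂ Pl.direction) : Pl.direction = L.directionᗮ :=
  eq_orthogonal_of_isOrtho_of_finrank_add hperp (by rw [hL, hPl, finrank_euclideanSpace_fin])

/-- With `Σ` the (unique) sphere of center `cSph` and radius `rSph > 0`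
through `C ∪ {Q}`: for every plane `Pl` containing `L`, every circle of positive radius
in `Pl` through `Q` and through the two points of `Pl ∩ C` is contained in `Σ` and has
radius `rSph`; moreover, `Σ` is the union of all such circles. -/
theorem sphere_is_union_of_circles (L : AffineSubspace ℝ E3) (hL : IsLine L)
    (Pl₀ : AffineSubspace ℝ E3) (hPl₀ : IsPlane Pl₀)
    (hperp : ∀ w ∈ L.direction, ∀ v ∈ Pl₀.direction, ⟪w, v⟫ = 0)
    (P : E3) (hPL : P ∈ L) (hPPl : P ∈ Pl₀)
    (C : Set E3) (ρ : ℝ) (hρ : 0 < ρ) (hC : IsCircleIn Pl₀ P ρ C)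
    (Q : E3) (hQL : Q ∈ L) (hQPl : Q ∉ Pl₀)
    (cSph : E3) (rSph : ℝ) (hrSph : 0 < rSph)
    (hSph : C ∪ {Q} ⊆ {x : E3 | ‖x - cSph‖ = rSph}) :
    (∀ Pl : AffineSubspace ℝ E3, IsPlane Pl → (L : Set E3) ⊆ (Pl : Set E3) →
      ∀ (C' : Set E3) (c' : E3) (r' : ℝ), 0 < r' → IsCircleIn Pl c' r' C' →
        Q ∈ C' → (Pl : Set E3) ∩ C ⊆ C' →
        C' ⊆ {x : E3 | ‖x - cSph‖ = rSph} ∧ r' = rSph) ∧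
    {x : E3 | ‖x - cSph‖ = rSph} =
      {x : E3 | ∃ Pl : AffineSubspace ℝ E3, IsPlane Pl ∧ (L : Set E3) ⊆ (Pl : Set E3) ∧
        ∃ (C' : Set E3) (c' : E3) (r' : ℝ), 0 < r' ∧ IsCircleIn Pl c' r' C' ∧
          Q ∈ C' ∧ (Pl : Set E3) ∩ C ⊆ C' ∧ x ∈ C'} := by
  simp only [IsCircleIn, ← dist_eq_norm] at hC hSph ⊢
  exact sphere_is_union_of_circles_general hL hL.ne_top (hPl₀.direction_eq_orthogonal hL
    (Submodule.isOrtho_iff_inner_eq.2 hperp)) hPL hPPl hρ hC hQL hQPl hrSph hSph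
end
end

section
/- Let S be a connected regular surface in ℝ³ and let Σ = {x ∈ ℝ³ | ‖x − c‖ = r} be a Euclidean sphere with r > 0 such that Σ ⊆ S. Then S = Σ. -/
noncomputable section

open Module
open scoped RealInnerProductSpace

/-!
Inside `S`, an immersed patch of the same dimension as `S` fills a neighbourhood: composing the
patch with a local retraction onto a chart of `S` gives a map between spaces of equal dimension
with injective, hence invertible, derivative, so the inverse function theorem makes it open.
Stereographic coordinates provide such a patch at every point of the sphere. The sphere is therefore
open in `S`; being also closed and nonempty, it is all of the connected set `S`.
-/

open Filter Metric Set Topology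

section Topology

variable {X Y : Type*} [TopologicalSpace X] [TopologicalSpace Y]

theorem eq_of_isPreconnected_of_isClosed_of_mem_nhdsWithin {s t : Set X} (hs : IsPreconnected s)
    (ht : IsClosed t) (hne : t.Nonempty) (hts : t ⊆ s) (hnhds : ∀ x ∈ t, t ∈ 𝓝[s] x) :
    s = t := by
  have : PreconnectedSpace s := Subtype.preconnectedSpace hs
  have hclopen : IsClopen ((↑) ⁻¹' t : Set s) :=
    ⟨ht.preimage continuous_subtype_val,
      isOpen_iff_mem_nhds.2 fun x hx => preimage_coe_mem_nhds_subtype.2 (hnhds x hx)⟩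
  obtain ⟨x, hx⟩ := hne
  have huniv : ((↑) ⁻¹' t : Set s) = univ := hclopen.eq_univ ⟨⟨x, hts hx⟩, hx⟩
  exact Subset.antisymm (fun y hy => eq_univ_iff_forall.1 huniv ⟨y, hy⟩) hts

theorem map_nhds_eq_nhdsWithin_image_of_isInducing_domRestrict {f : X → Y} {U : Set X} {u : X}
    (hf : IsInducing (U.domRestrict f)) (hU : U ∈ 𝓝 u) : map f (𝓝 u) = 𝓝[f '' U] (f u) := by
  have hu : u ∈ U := mem_of_mem_nhds hU
  have hmap := hf.map_nhds_eq ⟨u, hu⟩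
  rwa [domRestrict_eq, ← map_map, map_nhds_subtype_coe_eq_nhds hu hU, range_comp,
    Subtype.range_coe] at hmap

end Topology

section StrictDerivative

variable {𝕜 E E' F : Type*} [NontriviallyNormedField 𝕜] [NormedAddCommGroup E] [NormedSpace 𝕜 E]
  [NormedAddCommGroup E'] [NormedSpace 𝕜 E'] [NormedAddCommGroup F] [NormedSpace 𝕜 F]

theorem exists_hasStrictFDerivAt_local_leftInverse [CompleteSpace E] {f : E → F} {f' : E →L[𝕜] F}
    {u : E} (hf : HasStrictFDerivAt f f' u) (hf' : f'.HasLeftInverse) :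
    ∃ (g : F → E) (g' : F →L[𝕜] E),
      HasStrictFDerivAt g g' (f u) ∧ ∀ᶠ x in 𝓝 u, g (f x) = x := by
  obtain ⟨L, hL⟩ := hf'
  have hLf' : L ∘L f' = (ContinuousLinearEquiv.refl 𝕜 E : E →L[𝕜] E) :=
    ContinuousLinearMap.ext hL
  have hLf : HasStrictFDerivAt (L ∘ f) (ContinuousLinearEquiv.refl 𝕜 E : E →L[𝕜] E) u :=
    hLf' ▸ L.hasStrictFDerivAt.comp u hf
  exact ⟨_, _, hLf.to_localInverse.comp (f u) L.hasStrictFDerivAt, hLf.eventually_left_inverse⟩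

variable (𝕜 E) in
/-- `S` is near `p` an embedded submanifold modelled on `E`, in the weakest form to which the
inverse function theorem applies: some map, strictly differentiable with injective derivative at a
single parameter `u`, sends the neighbourhoods of `u` to the neighbourhoods of `p` in `S`. -/
def IsRegularAt (S : Set F) (p : F) : Prop :=
  ∃ (f : E → F) (f' : E →L[𝕜] F) (u : E), f u = p ∧ HasStrictFDerivAt f f' u ∧
    Function.Injective f' ∧ map f (𝓝 u) = 𝓝[S] p

theorem IsRegularAt.map_nhds_eq_nhdsWithin [CompleteSpace 𝕜] [FiniteDimensional 𝕜 F] {S : Set F}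
    {σ : E' → F} {σ' : E' →L[𝕜] F} {w : E'} (hS : IsRegularAt 𝕜 E S (σ w))
    (hσ : HasStrictFDerivAt σ σ' w) (hσ' : Function.Injective σ')
    (hdim : finrank 𝕜 E' = finrank 𝕜 E) (hσS : ∀ᶠ x in 𝓝 w, σ x ∈ S) :
    map σ (𝓝 w) = 𝓝[S] (σ w) := by
  obtain ⟨f, f', u, hfu, hf, hf', hmap⟩ := hS
  have : FiniteDimensional 𝕜 E := .of_injective (f' : E →ₗ[𝕜] F) hf'
  have : FiniteDimensional 𝕜 E' := .of_injective (σ' : E' →ₗ[𝕜] F) hσ'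
  have : CompleteSpace E := FiniteDimensional.complete 𝕜 E
  have : CompleteSpace E' := FiniteDimensional.complete 𝕜 E'
  obtain ⟨g, g', hg, hgf⟩ := exists_hasStrictFDerivAt_local_leftInverse hf
    (ContinuousLinearMap.HasLeftInverse.of_injective_of_finiteDimensional hf')
  have hgσ : HasStrictFDerivAt (g ∘ σ) (g' ∘L σ') w := (hfu ▸ hg).comp w hσ
  have hgσw : (g ∘ σ) w = u := by rw [Function.comp_apply, ← hfu, hgf.self_of_nhds]
  have hfg : ∀ᶠ q in 𝓝[S] (σ w), f (g q) = q := by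
    rw [← hmap, eventually_map]
    exact hgf.mono fun x hx => congrArg f hx
  have hfactor : f ∘ g ∘ σ =ᶠ[𝓝 w] σ :=
    (tendsto_nhdsWithin_iff.2 ⟨hσ.continuousAt, hσS⟩).eventually hfg
  have hchain : f' ∘L (g' ∘L σ') = σ' :=
    ((hgσw ▸ hf).hasFDerivAt.comp w hgσ.hasFDerivAt).unique
      (hσ.hasFDerivAt.congr_of_eventuallyEq hfactor)
  have hinj : Function.Injective (g' ∘L σ') :=
    .of_comp (f := f') (by rwa [← ContinuousLinearMap.coe_comp, hchain])
  have hsurj : (g' ∘L σ').range = ⊤ :=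
    (LinearMap.ker_eq_bot_iff_range_eq_top_of_finrank_eq_finrank hdim).1
      (LinearMap.ker_eq_bot.2 hinj)
  calc map σ (𝓝 w) = map f (map (g ∘ σ) (𝓝 w)) := by rw [map_map, map_congr hfactor]
    _ = map f (𝓝 u) := by rw [hgσ.map_nhds_eq_of_surj hsurj, hgσw]
    _ = 𝓝[S] (σ w) := hmap

end StrictDerivative

section Sphere

variable {E F : Type*} [NormedAddCommGroup E] [NormedSpace ℝ E] [NormedAddCommGroup F]
  [InnerProductSpace ℝ F]

/-- Inverse stereographic projection onto the sphere of centre `c` and radius `r` from its point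
`c + r • v`, where `v` is a unit vector; it parametrizes the sphere around `c - r • v`. -/
def spherePatch (c v : F) (r : ℝ) (w : (ℝ ∙ v)ᗮ) : F :=
  c + r • stereoInvFunAux v w

theorem spherePatch_zero (c v : F) (r : ℝ) : spherePatch c v r 0 = c - r • v := by
  simp [spherePatch, sub_eq_add_neg, smul_smul]

theorem spherePatch_mem_sphere (c : F) {v : F} (hv : ‖v‖ = 1) {r : ℝ} (hr : 0 ≤ r)
    (w : (ℝ ∙ v)ᗮ) : spherePatch c v r w ∈ sphere c r := by
  have hunit : ‖stereoInvFunAux v w‖ = 1 := mem_sphere_zero_iff_norm.1 (stereoInvFunAux_mem hv w.2)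
  rw [mem_sphere_iff_norm, spherePatch, add_sub_cancel_left, norm_smul, hunit, mul_one,
    Real.norm_of_nonneg hr]

theorem hasStrictFDerivAt_spherePatch (c v : F) (r : ℝ) :
    HasStrictFDerivAt (spherePatch c v r) (r • (ℝ ∙ v)ᗮ.subtypeL) 0 := by
  have hsmooth : ContDiff ℝ 1 (stereoInvFunAux v ∘ ((↑) : (ℝ ∙ v)ᗮ → F)) :=
    contDiff_stereoInvFunAux.comp (ℝ ∙ v)ᗮ.subtypeL.contDiff
  have hstereo := hsmooth.contDiffAt.hasStrictFDerivAt' (hasFDerivAt_stereoInvFunAux_comp_coe v)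
    one_ne_zero
  exact (hstereo.const_smul r).const_add c

theorem sphere_mem_nhdsWithin_of_isRegularAt (hdim : finrank ℝ F = finrank ℝ E + 1) {S : Set F}
    {c p : F} {r : ℝ} (hr : 0 < r) (hsub : sphere c r ⊆ S) (hp : p ∈ sphere c r)
    (hreg : IsRegularAt ℝ E S p) : sphere c r ∈ 𝓝[S] p := by
  have : Fact (finrank ℝ F = finrank ℝ E + 1) := ⟨hdim⟩
  have : FiniteDimensional ℝ F := .of_fact_finrank_eq_succ (finrank ℝ E)
  obtain ⟨v, hv, rfl⟩ : ∃ v : F, ‖v‖ = 1 ∧ spherePatch c v r 0 = p := by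
    refine ⟨r⁻¹ • (c - p), ?_, ?_⟩
    · rw [norm_smul, norm_sub_rev, mem_sphere_iff_norm.1 hp, norm_inv, Real.norm_of_nonneg hr.le,
        inv_mul_cancel₀ hr.ne']
    · rw [spherePatch_zero, smul_inv_smul₀ hr.ne', sub_sub_cancel]
  have hmem := spherePatch_mem_sphere c hv hr.le
  have hinj : Function.Injective (r • (ℝ ∙ v)ᗮ.subtypeL) :=
    (smul_right_injective F hr.ne').comp Subtype.val_injective
  have hdim' : finrank ℝ (ℝ ∙ v)ᗮ = finrank ℝ E :=
    Submodule.finrank_orthogonal_span_singleton (norm_ne_zero_iff.1 (hv ▸ one_ne_zero))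
  rw [← hreg.map_nhds_eq_nhdsWithin (hasStrictFDerivAt_spherePatch c v r) hinj hdim'
    (.of_forall fun w => hsub (hmem w))]
  exact mem_map.2 (Eventually.of_forall hmem)

theorem surface_containing_sphere_general (hdim : finrank ℝ F = finrank ℝ E + 1) {S : Set F}
    (hconn : IsPreconnected S) {c : F} {r : ℝ} (hr : 0 < r)
    (hreg : ∀ p ∈ sphere c r, IsRegularAt ℝ E S p) (hsub : sphere c r ⊆ S) :
    S = sphere c r := by
  have : Nontrivial F := nontrivial_of_finrank_eq_succ hdim
  exact eq_of_isPreconnected_of_isClosed_of_mem_nhdsWithin hconn isClosed_sphere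
    (NormedSpace.sphere_nonempty.2 hr.le) hsub
    fun p hp => sphere_mem_nhdsWithin_of_isRegularAt hdim hr hsub hp (hreg p hp)

end Sphere

theorem IsChartAt.isRegularAt {S : Set E3} {p : E3} {f : E2 → E3} {U : Set E2}
    (h : IsChartAt S p f U) : IsRegularAt ℝ E2 S p := by
  obtain ⟨hU, hf, hinj, ⟨u, hu, rfl⟩, ⟨W, hW, hWS⟩, φ, hφ⟩ := h
  have hU_nhds : U ∈ 𝓝 u := hU.mem_nhds hu
  have hinducing : IsInducing (U.domRestrict f) := by
    have hfφ : U.domRestrict f = (↑) ∘ φ := funext fun x => (hφ x).symm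
    exact hfφ ▸ IsInducing.subtypeVal.comp φ.isInducing
  have hfuW : f u ∈ W := (hWS ▸ mem_image_of_mem f hu : f u ∈ W ∩ S).1
  refine ⟨f, fderiv ℝ f u, u, rfl, (hf.contDiffAt hU_nhds).hasStrictFDerivAt (by simp),
    hinj u hu, ?_⟩
  rw [map_nhds_eq_nhdsWithin_image_of_isInducing_domRestrict hinducing hU_nhds, hWS,
    nhdsWithin_inter_of_mem (mem_nhdsWithin_of_mem_nhds (hW.mem_nhds hfuW))]

theorem IsRegularSurface.isRegularAt {S : Set E3} (hS : IsRegularSurface S) {p : E3} (hp : p ∈ S) :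
    IsRegularAt ℝ E2 S p := by
  obtain ⟨f, U, hchart⟩ := hS p hp
  exact hchart.isRegularAt

/-- A connected regular surface containing a Euclidean sphere equals it. -/
theorem surface_containing_sphere (S : Set E3) (hconn : IsConnected S)
    (hreg : IsRegularSurface S)
    (c : E3) (r : ℝ) (hr : 0 < r) (hsub : {x : E3 | ‖x - c‖ = r} ⊆ S) :
    S = {x : E3 | ‖x - c‖ = r} := by
  have hsphere : {x : E3 | ‖x - c‖ = r} = sphere c r := ext fun _ => mem_sphere_iff_norm.symm
  rw [hsphere] at hsub ⊢
  exact surface_containing_sphere_general (E := E2) (by simp) hconn.isPreconnected hr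
    (fun p hp => hreg.isRegularAt (hsub hp)) hsub
end
end

section
/- Let S be a nonempty regular surface in ℝ³ satisfying property 𝒫, and let Q ∈ S. Then there exists a plane Π₀ parallel to the tangent plane of S at Q (i.e., whose direction equals the tangent plane of S at Q) such that Π₀ ∩ S is a non-degenerate circle. -/
noncomputable section

open Module
open scoped RealInnerProductSpace

/-!
Project `S` along the tangent plane to `ℝ`. On a small circle around `u` in the parameter domain,
the height thus obtained takes the same value at some pair of antipodal points (Borsuk–Ulam in
dimension one). Since the chart is injective, some plane parallel to the tangent plane contains two
distinct points of `S`; a circle with two distinct points has positive radius.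
-/

section AntipodalPoints

variable {E : Type*} [NormedAddCommGroup E] [NormedSpace ℝ E]

theorem exists_mem_sphere_apply_add_eq_apply_sub {α : Type*} [LinearOrder α] [TopologicalSpace α]
    [OrderClosedTopology α] (hE : 1 < Module.rank ℝ E) {x : E} {r : ℝ} (hr : 0 ≤ r) {g : E → α}
    (hg : ContinuousOn g (Metric.sphere x r)) :
    ∃ v ∈ Metric.sphere (0 : E) r, g (x + v) = g (x - v) := by
  have hadd : ContinuousOn (fun v ↦ g (x + v)) (Metric.sphere 0 r) :=
    hg.comp (by fun_prop) fun v hv ↦ by simpa using hv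
  have hsub : ContinuousOn (fun v ↦ g (x - v)) (Metric.sphere 0 r) :=
    hg.comp (by fun_prop) fun v hv ↦ by simpa using hv
  have hconn := isConnected_sphere hE (0 : E) hr
  obtain ⟨v, hv⟩ := hconn.nonempty
  have hv_neg : -v ∈ Metric.sphere (0 : E) r := by simpa using hv
  rcases le_total (g (x + v)) (g (x - v)) with hle | hle
  · exact hconn.isPreconnected.intermediate_value₂ hv hv_neg hadd hsub hle
      (by simpa [← sub_eq_add_neg] using hle)
  · exact hconn.isPreconnected.intermediate_value₂ hv_neg hv hadd hsub
      (by simpa [← sub_eq_add_neg] using hle) hle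

theorem not_injOn_of_continuousOn_of_one_lt_rank {α : Type*} [LinearOrder α] [TopologicalSpace α]
    [OrderClosedTopology α] (hE : 1 < Module.rank ℝ E) {U : Set E} (hU : IsOpen U)
    (hne : U.Nonempty) {g : E → α} (hg : ContinuousOn g U) : ¬ Set.InjOn g U := by
  obtain ⟨x, hx⟩ := hne
  obtain ⟨r, hr, hball⟩ := Metric.nhds_basis_closedBall.mem_iff.mp (hU.mem_nhds hx)
  have hsphere : Metric.sphere x r ⊆ U := Metric.sphere_subset_closedBall.trans hball
  obtain ⟨v, hv, heq⟩ :=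
    exists_mem_sphere_apply_add_eq_apply_sub hE hr.le (hg.mono hsphere)
  intro hinj
  have hantipodal : x + v = x - v :=
    hinj (hsphere (by simpa using hv)) (hsphere (by simpa using hv)) heq
  have : IsAddTorsionFree E := .of_isTorsionFree ℝ E
  have hv_zero : v = 0 := by simpa [sub_eq_add_neg, self_eq_neg] using hantipodal
  exact Metric.ne_of_mem_sphere hv hr.ne' hv_zero

theorem exists_ne_sub_mem_of_finrank_quotient_eq_one {F : Type*} [AddCommGroup F] [Module ℝ F]
    [TopologicalSpace F] [IsTopologicalAddGroup F] [ContinuousSMul ℝ F] {T : Submodule ℝ F}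
    (hT : IsClosed (T : Set F)) (hcodim : finrank ℝ (F ⧸ T) = 1) (hE : 1 < Module.rank ℝ E)
    {U : Set E} (hU : IsOpen U) (hne : U.Nonempty) {f : E → F} (hf : ContinuousOn f U) :
    ∃ x ∈ U, ∃ y ∈ U, x ≠ y ∧ f x - f y ∈ T := by
  have := FiniteDimensional.of_finrank_pos (hcodim ▸ one_pos)
  let height : (F ⧸ T) ≃ₗ[ℝ] ℝ := LinearEquiv.ofFinrankEq _ _ (by simpa using hcodim)
  have hcont : ContinuousOn (fun x ↦ height (T.mkQ (f x))) U :=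
    (LinearMap.continuous_of_finiteDimensional height.toLinearMap).comp_continuousOn
      (T.mkQL.continuous.comp_continuousOn hf)
  have hnot := not_injOn_of_continuousOn_of_one_lt_rank hE hU hne hcont
  simp only [Set.InjOn, not_forall] at hnot
  obtain ⟨x, hx, y, hy, heq, hxy⟩ := hnot
  exact ⟨x, hx, y, hy, hxy, (Submodule.Quotient.eq T).mp (height.injective heq)⟩

end AntipodalPoints

theorem IsCircleIn.radius_pos_of_nontrivial {Pl : AffineSubspace ℝ E3} {c : E3} {r : ℝ}
    {C : Set E3} (hC : IsCircleIn Pl c r C) (hnt : C.Nontrivial) : 0 < r := by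
  obtain ⟨-, hr, rfl⟩ := hC
  refine hr.lt_of_ne' ?_
  rintro rfl
  obtain ⟨x, ⟨-, hx⟩, y, ⟨-, hy⟩, hxy⟩ := hnt
  exact hxy ((norm_sub_eq_zero_iff.mp hx).trans (norm_sub_eq_zero_iff.mp hy).symm)

namespace IsChartAt

variable {S : Set E3} {p : E3} {f : E2 → E3} {U : Set E2}

theorem isOpen (h : IsChartAt S p f U) : IsOpen U :=
  h.1

theorem continuousOn (h : IsChartAt S p f U) : ContinuousOn f U :=
  h.2.1.continuousOn

theorem mapsTo (h : IsChartAt S p f U) : Set.MapsTo f U S := by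
  obtain ⟨-, -, -, -, ⟨W, -, himage⟩, -⟩ := h
  exact Set.mapsTo_iff_image_subset.mpr (himage ▸ Set.inter_subset_right)

theorem injOn (h : IsChartAt S p f U) : Set.InjOn f U := by
  obtain ⟨-, -, -, -, -, φ, hφ⟩ := h
  rw [Set.injOn_iff_injective]
  convert Subtype.val_injective.comp φ.injective using 1
  exact funext fun u ↦ (hφ u).symm

theorem finrank_tangentPlane (h : IsChartAt S p f U) {u : E2} (hu : u ∈ U) :
    finrank ℝ (TangentPlane f u) = 2 :=
  (LinearMap.finrank_range_of_inj (h.2.2.1 u hu)).trans finrank_euclideanSpace_fin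

end IsChartAt

theorem exists_parallel_plane_nondegenerate_circle_general {S : Set E3} {T : Submodule ℝ E3}
    (hT : finrank ℝ T = 2)
    (hcircle : ∀ Pl : AffineSubspace ℝ E3, Pl.direction = T → ((Pl : Set E3) ∩ S).Nonempty →
      ∃ c r, IsCircleIn Pl c r ((Pl : Set E3) ∩ S))
    {U : Set E2} (hU : IsOpen U) (hne : U.Nonempty) {f : E2 → E3} (hf : ContinuousOn f U)
    (hinj : Set.InjOn f U) (hmaps : Set.MapsTo f U S) :
    ∃ Pl₀ : AffineSubspace ℝ E3, IsPlane Pl₀ ∧ Pl₀.direction = T ∧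
      ∃ (c : E3) (r : ℝ), 0 < r ∧ IsCircleIn Pl₀ c r ((Pl₀ : Set E3) ∩ S) := by
  have hcodim : finrank ℝ (E3 ⧸ T) = 1 := by
    rw [T.finrank_quotient, hT, finrank_euclideanSpace_fin]
  have hrank : 1 < Module.rank ℝ E2 := one_lt_rank_of_one_lt_finrank (by simp)
  obtain ⟨x, hx, y, hy, hxy, hsub⟩ := exists_ne_sub_mem_of_finrank_quotient_eq_one
    T.closed_of_finiteDimensional hcodim hrank hU hne hf
  let Pl₀ := AffineSubspace.mk' (f y) T
  have hdir : Pl₀.direction = T := AffineSubspace.direction_mk' _ _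
  have hnt : ((Pl₀ : Set E3) ∩ S).Nontrivial :=
    ⟨f x, ⟨AffineSubspace.mem_mk'.mpr hsub, hmaps hx⟩,
      f y, ⟨AffineSubspace.self_mem_mk' _ _, hmaps hy⟩, hinj.ne hx hy hxy⟩
  obtain ⟨c, r, hC⟩ := hcircle Pl₀ hdir hnt.nonempty
  exact ⟨Pl₀, by rwa [IsPlane, hdir], hdir, c, r, hC.radius_pos_of_nontrivial hnt, hC⟩

/-- For a nonempty regular surface `S` with property 𝒫 and `Q ∈ S`,
some plane parallel to the tangent plane of `S` at `Q` meets `S` in a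
non-degenerate circle. -/
theorem exists_parallel_plane_nondegenerate_circle (S : Set E3) (hne : S.Nonempty)
    (hreg : IsRegularSurface S) (hP : PropertyP S) (Q : E3) (hQ : Q ∈ S)
    (f : E2 → E3) (U : Set E2) (hchart : IsChartAt S Q f U)
    (u : E2) (hu : u ∈ U) (hfu : f u = Q) :
    ∃ Pl₀ : AffineSubspace ℝ E3, IsPlane Pl₀ ∧ Pl₀.direction = TangentPlane f u ∧
      ∃ (c : E3) (r : ℝ), 0 < r ∧ IsCircleIn Pl₀ c r ((Pl₀ : Set E3) ∩ S) := by
  have hT := hchart.finrank_tangentPlane hu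
  exact exists_parallel_plane_nondegenerate_circle_general hT
    (fun Pl hPl ↦ hP Pl (by rwa [IsPlane, hPl])) hchart.isOpen ⟨u, hu⟩
    hchart.continuousOn hchart.injOn hchart.mapsTo
end
end
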